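/- arXiv:1408.3325 — 3 statements merged into one kernel-verified Lean document; each statement's English description precedes it below -/
import Mathlib

section
/- For every two spanning cycles C₁=(V,E₁) and C₂=(V,E₂) on a common set V of n ≥ 3 vertices, there exists a RacSim drawing of C₁ and C₂ on an integer grid of size 2n×2n in which every edge of both cycles is drawn with at most one bend. -/
open SimpleGraph

/-- A polyline with `n` straight-line segments, given by its `n + 1` corner points. -/
structure Polyline where
  n : ℕ
  pts : Fin (n + 1) → ℝ × ℝ

namespace Polyline

/-- The first point of a polyline. -/
def first (P : Polyline) : ℝ × ℝ := P.pts 0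

/-- The last point of a polyline. -/
def last (P : Polyline) : ℝ × ℝ := P.pts (Fin.last P.n)

/-- The segments of a polyline, as ordered pairs of endpoints. -/
def segs (P : Polyline) : Set ((ℝ × ℝ) × (ℝ × ℝ)) :=
  {s | ∃ i : Fin P.n, s = (P.pts i.castSucc, P.pts i.succ)}

/-- The set of points covered by a polyline. -/
def curve (P : Polyline) : Set (ℝ × ℝ) :=
  ⋃ i : Fin P.n, segment ℝ (P.pts i.castSucc) (P.pts i.succ)

end Polyline

/-- Two segments are perpendicular: their direction vectors have zero dot product. -/
def SegPerp (s t : (ℝ × ℝ) × (ℝ × ℝ)) : Prop :=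
  (s.2.1 - s.1.1) * (t.2.1 - t.1.1) + (s.2.2 - s.1.2) * (t.2.2 - t.1.2) = 0

/-- Two segments cross: their relative interiors meet. -/
def SegCross (s t : (ℝ × ℝ) × (ℝ × ℝ)) : Prop :=
  (openSegment ℝ s.1 s.2 ∩ openSegment ℝ t.1 t.2).Nonempty

/-- A point has integer coordinates lying in `{1, …, a} × {1, …, b}`. -/
def OnGridPt (a b : ℤ) (p : ℝ × ℝ) : Prop :=
  ∃ x y : ℤ, p = ((x : ℝ), (y : ℝ)) ∧ 1 ≤ x ∧ x ≤ a ∧ 1 ≤ y ∧ y ≤ b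

/-- A simultaneous polyline drawing of the graphs `G 0, …, G (m - 1)` on a common
vertex set `V`: an injective placement of the vertices in the plane together with,
for each graph and each of its edges, a polyline joining the placements of the two
endpoints of the edge. -/
structure SimDrawing {V : Type} {m : ℕ} (G : Fin m → SimpleGraph V) where
  pos : V → ℝ × ℝ
  pos_injective : Function.Injective pos
  poly : Fin m → Sym2 V → Polyline
  joins : ∀ (i : Fin m) (a b : V), (G i).Adj a b →
    ((poly i s(a, b)).first = pos a ∧ (poly i s(a, b)).last = pos b) ∨
    ((poly i s(a, b)).first = pos b ∧ (poly i s(a, b)).last = pos a)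

namespace SimDrawing

variable {V : Type} {m : ℕ} {G : Fin m → SimpleGraph V} (D : SimDrawing G)

/-- (i) Each graph is drawn planar: the polylines of two distinct edges of the same
graph intersect only in points representing common endpoints. -/
def PlanarEach : Prop :=
  ∀ i : Fin m, ∀ e ∈ (G i).edgeSet, ∀ e' ∈ (G i).edgeSet, e ≠ e' →
    (D.poly i e).curve ∩ (D.poly i e').curve ⊆
      {p | ∃ v : V, v ∈ e ∧ v ∈ e' ∧ p = D.pos v}

/-- (ii) No two segments belonging to distinct edges overlap in more than one point. -/
def NoOverlaps : Prop :=
  ∀ i : Fin m, ∀ e ∈ (G i).edgeSet, ∀ j : Fin m, ∀ e' ∈ (G j).edgeSet,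
    (i ≠ j ∨ e ≠ e') →
      ∀ s ∈ (D.poly i e).segs, ∀ t ∈ (D.poly j e').segs,
        (segment ℝ s.1 s.2 ∩ segment ℝ t.1 t.2).Subsingleton

/-- (iii) Whenever segments of edges of two different graphs cross, they are
perpendicular at the crossing point. -/
def RightAngleCrossings : Prop :=
  ∀ i j : Fin m, i ≠ j → ∀ e ∈ (G i).edgeSet, ∀ e' ∈ (G j).edgeSet,
    ∀ s ∈ (D.poly i e).segs, ∀ t ∈ (D.poly j e').segs, SegCross s t → SegPerp s t

/-- A RacSim (RAC simultaneous) drawing: conditions (i), (ii) and (iii). -/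
def IsRacSim : Prop :=
  D.PlanarEach ∧ D.NoOverlaps ∧ D.RightAngleCrossings

/-- All vertex points and all corner points (hence all segment endpoints) of the
drawing lie on the integer grid `{1, …, a} × {1, …, b}`. -/
def OnGrid (a b : ℤ) : Prop :=
  (∀ v : V, OnGridPt a b (D.pos v)) ∧
    ∀ i : Fin m, ∀ e ∈ (G i).edgeSet, ∀ k : Fin ((D.poly i e).n + 1),
      OnGridPt a b ((D.poly i e).pts k)

/-- Every edge of the `i`-th graph is drawn with at most `k` bends, i.e. its
polyline consists of at most `k + 1` segments. -/
def BendsAtMost (i : Fin m) (k : ℕ) : Prop :=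
  ∀ e ∈ (G i).edgeSet, (D.poly i e).n ≤ k + 1

end SimDrawing

/-- The degree of a vertex of a graph. -/
noncomputable def vdeg {V : Type} (G : SimpleGraph V) (v : V) : ℕ := (G.neighborSet v).ncard

/-- A spanning cycle on a vertex set: a connected graph in which every vertex has
degree exactly 2 (a Hamiltonian cycle on the vertex set). -/
def IsSpanningCycle {V : Type} (G : SimpleGraph V) : Prop :=
  G.Connected ∧ ∀ v : V, vdeg G v = 2

/-- Combinatorial data of a spanning cycle: even integer coordinates `X` following the cyclic
order from `v0`, and an orientation of each edge along the cycle. -/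
structure CycDat {V : Type} (G : SimpleGraph V) (v0 : V) (n : ℕ) (X : V → ℤ)
    (tl hd : Sym2 V → V) : Prop where
  inj : Function.Injective X
  even : ∀ v, ∃ k : ℤ, X v = 2 * k
  lo : ∀ v, 2 ≤ X v
  hi : ∀ v, X v ≤ 2 * (n : ℤ)
  base : X v0 = 2
  edge : ∀ e ∈ G.edgeSet, e = s(tl e, hd e)
  step : ∀ e ∈ G.edgeSet, X (hd e) = X (tl e) + 2 ∨ (hd e = v0 ∧ X (tl e) = 2 * (n : ℤ))

theorem exists_cycDat {V : Type} [Fintype V] (n : ℕ)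
    (hcard : Fintype.card V = n) (G : SimpleGraph V)
    (h : IsSpanningCycle G) (v0 : V) : ∃ X tl hd, CycDat G v0 n X tl hd := by
  classical
  obtain ⟨hconn, hdeg⟩ := h
  have hcyc : G.IsCycles := fun v _ => hdeg v
  have hne : (G.neighborSet v0).Nonempty := by
    apply Set.nonempty_of_ncard_ne_zero
    have := hdeg v0
    unfold vdeg at this
    omega
  obtain ⟨p, hp, hverts⟩ := hcyc.exists_cycle_toSubgraph_verts_eq_connectedComponentSupp
    (c := G.connectedComponentMk v0) (by simp) hne
  have hall : ∀ v, v ∈ p.toSubgraph.verts := by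
    intro v
    rw [hverts, ConnectedComponent.mem_supp_iff, ConnectedComponent.eq]
    exact hconn.preconnected v v0
  have hlen : 3 ≤ p.length := hp.three_le_length
  have hsurj : ∀ v, ∃ k, k < p.length ∧ p.getVert k = v := by
    intro v
    have h1 := hall v
    rw [Walk.mem_verts_toSubgraph, Walk.mem_support_iff_exists_getVert] at h1
    obtain ⟨k, hk, hkl⟩ := h1
    rcases Nat.lt_or_ge k p.length with h2 | h2
    · exact ⟨k, h2, hk⟩
    · have : k = p.length := le_antisymm hkl h2
      subst this
      exact ⟨0, by omega, by rw [← hk]; simp⟩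
  have hinj : ∀ i j, i < p.length → j < p.length → p.getVert i = p.getVert j → i = j := by
    intro i j hi hj hij
    exact hp.getVert_injOn' (show i ≤ p.length - 1 by omega) (show j ≤ p.length - 1 by omega) hij
  have hlenn : p.length = n := by
    rw [← hcard, ← Fintype.card_fin p.length]
    apply Fintype.card_of_bijective (f := fun k : Fin p.length => p.getVert k)
    constructor
    · intro i j hij
      exact Fin.ext (hinj _ _ i.2 j.2 hij)
    · intro v
      obtain ⟨k, hk, hkv⟩ := hsurj v
      exact ⟨⟨k, hk⟩, hkv⟩
  choose idx hidx hget using hsurj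
  have hidxget : ∀ k, k < p.length → idx (p.getVert k) = k := fun k hk =>
    hinj _ _ (hidx _) hk (hget _)
  have hedge : ∀ e : Sym2 V, ∃ k, e ∈ G.edgeSet →
      (k < p.length ∧ e = s(p.getVert k, p.getVert (k + 1))) := by
    intro e
    by_cases he : e ∈ G.edgeSet
    · induction e with
      | h a b =>
        have hadj : p.toSubgraph.Adj a b := by
          rw [hp.adj_toSubgraph_iff_of_isCycles hcyc (hall a)]
          exact he
        rw [Walk.toSubgraph_adj_iff] at hadj
        obtain ⟨i, hi, hil⟩ := hadj
        exact ⟨i, fun _ => ⟨hil, hi.symm⟩⟩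
    · exact ⟨0, fun h => absurd h he⟩
  choose K hK using hedge
  refine ⟨fun v => 2 * ((idx v : ℤ) + 1), fun e => p.getVert (K e),
    fun e => p.getVert (K e + 1), ?_, ?_, ?_, ?_, ?_, ?_, ?_⟩
  · intro a b hab
    have : idx a = idx b := by
      simp only at hab
      omega
    rw [← hget a, ← hget b, this]
  · intro v; exact ⟨_, rfl⟩
  · intro v; omega
  · intro v
    have := hidx v
    omega
  · have := hidxget 0 (by omega)
    simp only [Walk.getVert_zero] at this
    simp [this]
  · intro e he
    exact (hK e he).2
  · intro e he
    have hk := (hK e he).1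
    rw [hidxget _ hk]
    rcases Nat.lt_or_ge (K e + 1) p.length with h2 | h2
    · left
      rw [hidxget _ h2]
      push_cast; ring
    · right
      have h3 : K e + 1 = p.length := by omega
      refine ⟨by rw [h3]; simp, ?_⟩
      omega

/-- `(u, v)` lies on the axis-parallel part of an edge. -/
def OnV (xp yp yq : ℤ) (u v : ℝ) : Prop :=
  ∃ t : ℝ, 0 ≤ t ∧ t ≤ 1 ∧ u = xp ∧ v = yp + t * (yq - 1 - yp)

/-- `(u, v)` lies on the slanted part of an edge. -/
def OnS (xp xq yq : ℤ) (u v : ℝ) : Prop :=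
  ∃ t : ℝ, 0 ≤ t ∧ t ≤ 1 ∧ u = xp + t * (xq - xp) ∧ v = yq - 1 + t

section core
variable {V : Type} {G : SimpleGraph V} {v0 : V} {n : ℕ} {X : V → ℤ} {tl hd : Sym2 V → V}

theorem CycDat.tl_ne (h : CycDat G v0 n X tl hd) {e e' : Sym2 V} (he : e ∈ G.edgeSet)
    (he' : e' ∈ G.edgeSet) (hne : e ≠ e') : tl e ≠ tl e' := by
  intro heq
  apply hne
  rw [h.edge e he, h.edge e' he', heq]
  suffices hh : hd e = hd e' by rw [hh]
  have h1 := h.hi (hd e)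
  have h2 := h.hi (hd e')
  rcases h.step e he with h3 | ⟨h3, h3'⟩ <;> rcases h.step e' he' with h4 | ⟨h4, h4'⟩
  · apply h.inj; rw [h3, h4, heq]
  · rw [heq] at h3; omega
  · rw [← heq] at h4; omega
  · rw [h3, h4]

theorem CycDat.hd_ne (h : CycDat G v0 n X tl hd) {e e' : Sym2 V} (he : e ∈ G.edgeSet)
    (he' : e' ∈ G.edgeSet) (hne : e ≠ e') : hd e ≠ hd e' := by
  intro heq
  apply h.tl_ne he he' hne
  apply h.inj
  have h1 := h.lo (tl e)
  have h2 := h.lo (tl e')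
  have hb := h.base
  rcases h.step e he with h3 | ⟨h3, h3'⟩ <;> rcases h.step e' he' with h4 | ⟨h4, h4'⟩
  · rw [heq] at h3; omega
  · rw [heq, h4] at h3; omega
  · rw [← heq, h3] at h4; omega
  · rw [h3', h4']

theorem CycDat.tl_mem (h : CycDat G v0 n X tl hd) {e : Sym2 V} (he : e ∈ G.edgeSet) :
    tl e ∈ e := by
  have := Sym2.mem_mk_left (tl e) (hd e)
  rwa [← h.edge e he] at this

theorem CycDat.hd_mem (h : CycDat G v0 n X tl hd) {e : Sym2 V} (he : e ∈ G.edgeSet) :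
    hd e ∈ e := by
  have := Sym2.mem_mk_right (tl e) (hd e)
  rwa [← h.edge e he] at this

/-- The other coordinate. -/
structure Oth {V : Type} (v0 : V) (Y : V → ℤ) : Prop where
  inj : Function.Injective Y
  even : ∀ v, ∃ k : ℤ, Y v = 2 * k
  lo : ∀ v, 2 ≤ Y v
  base : Y v0 = 2

theorem CycDat.oth (h : CycDat G v0 n X tl hd) : Oth v0 X := ⟨h.inj, h.even, h.lo, h.base⟩

theorem Oth.four_le {Y : V → ℤ} (h : Oth v0 Y) {v : V} (hv : v ≠ v0) : 4 ≤ Y v := by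
  have h1 := h.lo v
  obtain ⟨k, hk⟩ := h.even v
  have h2 : Y v ≠ 2 := fun h3 => hv (h.inj (h3.trans h.base.symm))
  omega

theorem OnS.cases {xp xq yq : ℤ} {u v : ℝ} (h : OnS xp xq yq u v) (hx : xq = xp + 2) :
    (xp : ℝ) ≤ u ∧ u ≤ xp + 2 ∧ (u = xq → v = yq) := by
  obtain ⟨t, h0, h1, hu, hv⟩ := h
  subst hx
  push_cast at hu ⊢
  refine ⟨by linarith, by linarith, fun h => ?_⟩
  linarith

variable {Y : V → ℤ}

theorem core_VS (h : CycDat G v0 n X tl hd) (hY : Oth v0 Y) {e e' : Sym2 V}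
    (he : e ∈ G.edgeSet) (he' : e' ∈ G.edgeSet) (hne : e ≠ e') {u v : ℝ}
    (h1 : OnV (X (tl e)) (Y (tl e)) (Y (hd e)) u v)
    (h2 : OnS (X (tl e')) (X (hd e')) (Y (hd e')) u v) :
    ∃ w, w ∈ e ∧ w ∈ e' ∧ u = X w ∧ v = Y w := by
  have htl := h.tl_ne he he' hne
  have hhd := h.hd_ne he he' hne
  obtain ⟨t, h0, h1, hu, hv⟩ := h1
  rcases h.step e' he' with h3 | ⟨h3, h3'⟩
  · obtain ⟨ha, hb, hc⟩ := h2.cases h3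
    have ha' : X (tl e') ≤ X (tl e) := by rw [hu] at ha; exact_mod_cast ha
    have hb' : X (tl e) ≤ X (tl e') + 2 := by rw [hu] at hb; exact_mod_cast hb
    have hx : X (tl e) ≠ X (tl e') := fun h' => htl (h.inj h')
    obtain ⟨k, hk⟩ := h.even (tl e)
    obtain ⟨k', hk'⟩ := h.even (tl e')
    have heq : X (tl e) = X (hd e') := by omega
    have heq' := h.inj heq
    refine ⟨tl e, h.tl_mem he, heq' ▸ h.hd_mem he', hu, ?_⟩
    rw [heq']
    exact hc (by rw [hu, heq])
  · obtain ⟨s, hs0, hs1, hsu, hsv⟩ := h2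
    have hq : hd e ≠ v0 := h3 ▸ hhd
    have hy4 : (4 : ℝ) ≤ Y (hd e) := by exact_mod_cast hY.four_le hq
    have hy2 : (2 : ℝ) ≤ Y (tl e) := by exact_mod_cast hY.lo (tl e)
    rw [h3, hY.base] at hsv
    rw [h3, h.base] at hsu
    push_cast at hsv hsu
    have hs : s = 1 := by nlinarith
    subst hs
    have hu2 : (X (tl e) : ℝ) = 2 := by linarith
    have hu3 : X (tl e) = X v0 := by rw [h.base]; exact_mod_cast hu2
    have hw := h.inj hu3
    refine ⟨v0, hw ▸ h.tl_mem he, h3 ▸ h.hd_mem he', ?_, ?_⟩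
    · rw [hu, hu3]
    · rw [hsv, hY.base]; norm_num

theorem core_SS (h : CycDat G v0 n X tl hd) (hY : Oth v0 Y) {e e' : Sym2 V}
    (he : e ∈ G.edgeSet) (he' : e' ∈ G.edgeSet) (hne : e ≠ e') {u v : ℝ}
    (h1 : OnS (X (tl e)) (X (hd e)) (Y (hd e)) u v)
    (h2 : OnS (X (tl e')) (X (hd e')) (Y (hd e')) u v) :
    ∃ w, w ∈ e ∧ w ∈ e' ∧ u = X w ∧ v = Y w := by
  have htl := h.tl_ne he he' hne
  have hhd := h.hd_ne he he' hne
  rcases h.step e he with h3 | ⟨h3, h3'⟩ <;> rcases h.step e' he' with h4 | ⟨h4, h4'⟩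
  · obtain ⟨ha, hb, hc⟩ := h1.cases h3
    obtain ⟨ha', hb', hc'⟩ := h2.cases h4
    have hd1 : X (tl e) ≤ X (tl e') + 2 := by exact_mod_cast ha.trans hb'
    have hd2 : X (tl e') ≤ X (tl e) + 2 := by exact_mod_cast ha'.trans hb
    have hx : X (tl e) ≠ X (tl e') := fun h' => htl (h.inj h')
    obtain ⟨k, hk⟩ := h.even (tl e)
    obtain ⟨k', hk'⟩ := h.even (tl e')
    have : X (tl e) = X (hd e') ∨ X (tl e') = X (hd e) := by omega
    rcases this with heq | heq
    · have hu : u = X (hd e') := by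
        have : (X (hd e') : ℝ) = X (tl e') + 2 := by exact_mod_cast h4
        rw [← heq] at this ⊢
        linarith
      refine ⟨hd e', h.inj heq ▸ h.tl_mem he, h.hd_mem he', hu, hc' hu⟩
    · have hu : u = X (hd e) := by
        have : (X (hd e) : ℝ) = X (tl e) + 2 := by exact_mod_cast h3
        rw [← heq] at this ⊢
        linarith
      refine ⟨hd e, h.hd_mem he, h.inj heq ▸ h.tl_mem he', hu, hc hu⟩
  · exfalso
    obtain ⟨t, h0, h1, hu, hv⟩ := h1
    obtain ⟨s, hs0, hs1, hsu, hsv⟩ := h2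
    have hy4 : (4 : ℝ) ≤ Y (hd e) := by exact_mod_cast hY.four_le (h4 ▸ hhd)
    rw [h4, hY.base] at hsv
    push_cast at hsv
    linarith
  · exfalso
    obtain ⟨t, h0, h1, hu, hv⟩ := h1
    obtain ⟨s, hs0, hs1, hsu, hsv⟩ := h2
    have hy4 : (4 : ℝ) ≤ Y (hd e') := by exact_mod_cast hY.four_le (h3 ▸ hhd.symm)
    rw [h3, hY.base] at hv
    push_cast at hv
    linarith
  · exact absurd (h3.trans h4.symm) hhd

theorem core_planar (h : CycDat G v0 n X tl hd) (hY : Oth v0 Y) {e e' : Sym2 V}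
    (he : e ∈ G.edgeSet) (he' : e' ∈ G.edgeSet) (hne : e ≠ e') {u v : ℝ}
    (h1 : OnV (X (tl e)) (Y (tl e)) (Y (hd e)) u v ∨ OnS (X (tl e)) (X (hd e)) (Y (hd e)) u v)
    (h2 : OnV (X (tl e')) (Y (tl e')) (Y (hd e')) u v ∨
      OnS (X (tl e')) (X (hd e')) (Y (hd e')) u v) :
    ∃ w, w ∈ e ∧ w ∈ e' ∧ u = X w ∧ v = Y w := by
  rcases h1 with h1 | h1 <;> rcases h2 with h2 | h2
  · exfalso
    obtain ⟨t, -, -, hu, -⟩ := h1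
    obtain ⟨s, -, -, hu', -⟩ := h2
    rw [hu] at hu'
    exact h.tl_ne he he' hne (h.inj (by exact_mod_cast hu'))
  · exact core_VS h hY he he' hne h1 h2
  · obtain ⟨w, ha, hb, hc⟩ := core_VS h hY he' he hne.symm h2 h1
    exact ⟨w, hb, ha, hc⟩
  · exact core_SS h hY he he' hne h1 h2

end core

/-- At most one common point of two slanted parts of different graphs. -/
theorem onS_onS_unique {xp xq yq yp' yw xw : ℤ} (hev : ∃ k : ℤ, xq - xp = 2 * k)
    {u v u' v' : ℝ}
    (h1 : OnS xp xq yq u v) (h2 : OnS yp' yw xw v u)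
    (h1' : OnS xp xq yq u' v') (h2' : OnS yp' yw xw v' u') : u = u' ∧ v = v' := by
  obtain ⟨t, -, -, a1, a2⟩ := h1
  obtain ⟨s, -, -, b1, b2⟩ := h2
  obtain ⟨t', -, -, a1', a2'⟩ := h1'
  obtain ⟨s', -, -, b1', b2'⟩ := h2'
  obtain ⟨k, hk⟩ := hev
  have hne : (xq - xp) * (yw - yp') ≠ 1 := by
    rw [hk]
    intro h
    have : (2 : ℤ) ∣ 1 := ⟨k * (yw - yp'), by rw [← h]; ring⟩
    norm_num at this
  have hne' : ((xq : ℝ) - xp) * (yw - yp') - 1 ≠ 0 := by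
    intro h
    apply hne
    have : ((xq : ℝ) - xp) * (yw - yp') = 1 := by linarith
    exact_mod_cast this
  have e1 : (t - t') * ((xq : ℝ) - xp) = s - s' := by linarith
  have e2 : (s - s') * ((yw : ℝ) - yp') = t - t' := by linarith
  have e3 : (s - s') * (((xq : ℝ) - xp) * (yw - yp') - 1) = 0 := by
    rw [← e2] at e1
    linarith
  have e4 : s - s' = 0 := (mul_eq_zero.mp e3).resolve_right hne'
  rw [e4] at e2
  constructor <;> linarith

/-- Slanted parts of different graphs have no common interior point. -/
theorem no_cross_SS {V : Type} {C₁ C₂ : SimpleGraph V} {v0 : V} {n : ℕ} {X Y : V → ℤ}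
    {tl hd tl' hd' : Sym2 V → V} (h₁ : CycDat C₁ v0 n X tl hd) (h₂ : CycDat C₂ v0 n Y tl' hd')
    {e e' : Sym2 V} (he : e ∈ C₁.edgeSet) (_he' : e' ∈ C₂.edgeSet) {t s : ℝ}
    (ht0 : 0 < t) (ht1 : t < 1) (hs0 : 0 < s) (hs1 : s < 1)
    (hu : X (tl e) + t * (X (hd e) - X (tl e)) = (X (hd' e') - 1 + s : ℝ))
    (hv : Y (hd e) - 1 + t = (Y (tl' e') + s * (Y (hd' e') - Y (tl' e')) : ℝ)) : False := by
  rcases h₁.step e he with h3 | ⟨h3, h3'⟩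
  · have h3r : (X (hd e) : ℝ) = X (tl e) + 2 := by exact_mod_cast h3
    have hlt : X (tl e) < X (hd' e') := by
      have : (X (tl e) : ℝ) < X (hd' e') := by rw [h3r] at hu; linarith
      exact_mod_cast this
    have hlt' : X (hd' e') < X (tl e) + 3 := by
      have : (X (hd' e') : ℝ) < X (tl e) + 3 := by rw [h3r] at hu; linarith
      exact_mod_cast this
    obtain ⟨k, hk⟩ := h₁.even (tl e)
    obtain ⟨k', hk'⟩ := h₁.even (hd e)
    obtain ⟨k'', hk''⟩ := h₁.even (hd' e')
    have hx : X (hd' e') = X (hd e) := by omega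
    have hw := h₁.inj hx
    have := onS_onS_unique (xp := X (tl e)) (xq := X (hd e)) (yq := Y (hd e))
      (yp' := Y (tl' e')) (yw := Y (hd' e')) (xw := X (hd' e')) ⟨1, by omega⟩
      ⟨t, ht0.le, ht1.le, rfl, rfl⟩ ⟨s, hs0.le, hs1.le, hv, hu⟩
      (u' := X (hd e)) (v' := Y (hd e)) ⟨1, by norm_num, le_rfl, by ring, by ring⟩
      ⟨1, by norm_num, le_rfl, by rw [hw]; ring, by rw [hw]; ring⟩
    linarith [this.2]
  · rw [h3, h₂.base] at hv
    push_cast at hv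
    have ha : (2 : ℝ) ≤ Y (tl' e') := by exact_mod_cast h₂.lo _
    have hb : (2 : ℝ) ≤ Y (hd' e') := by exact_mod_cast h₂.lo _
    nlinarith

theorem mem_seg_param {a b z : ℝ × ℝ} (h : z ∈ segment ℝ a b) :
    ∃ t : ℝ, 0 ≤ t ∧ t ≤ 1 ∧ z.1 = a.1 + t * (b.1 - a.1) ∧ z.2 = a.2 + t * (b.2 - a.2) := by
  rw [segment_eq_image'] at h
  obtain ⟨t, ⟨h0, h1⟩, rfl⟩ := h
  exact ⟨t, h0, h1, by simp, by simp⟩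

theorem mem_oseg_param {a b z : ℝ × ℝ} (h : z ∈ openSegment ℝ a b) :
    ∃ t : ℝ, 0 < t ∧ t < 1 ∧ z.1 = a.1 + t * (b.1 - a.1) ∧ z.2 = a.2 + t * (b.2 - a.2) := by
  rw [openSegment_eq_image'] at h
  obtain ⟨t, ⟨h0, h1⟩, rfl⟩ := h
  exact ⟨t, h0, h1, by simp, by simp⟩

section drawing
variable {V : Type}

/-- Placement of a vertex. -/
def posXY (X Y : V → ℤ) (v : V) : ℝ × ℝ := ((X v : ℝ), (Y v : ℝ))

/-- The one-bend polyline through three points. -/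
def poly3 (a b c : ℝ × ℝ) : Polyline := ⟨2, ![a, b, c]⟩

theorem poly3_segs {a b c : ℝ × ℝ} {s} (h : s ∈ (poly3 a b c).segs) : s = (a, b) ∨ s = (b, c) := by
  obtain ⟨i, hi⟩ := h
  change Fin 2 at i
  fin_cases i
  · left; exact hi
  · right; exact hi

theorem poly3_curve {a b c z : ℝ × ℝ} (h : z ∈ (poly3 a b c).curve) :
    z ∈ segment ℝ a b ∨ z ∈ segment ℝ b c := by
  simp only [Polyline.curve, Set.mem_iUnion] at h
  obtain ⟨i, hi⟩ := h
  change Fin 2 at i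
  fin_cases i
  · left; exact hi
  · right; exact hi

theorem seg_sub_curve {P : Polyline} {s} (h : s ∈ P.segs) : segment ℝ s.1 s.2 ⊆ P.curve := by
  obtain ⟨i, rfl⟩ := h
  exact Set.subset_iUnion (fun i : Fin P.n => segment ℝ (P.pts i.castSucc) (P.pts i.succ)) i

variable (X Y : V → ℤ) (tl hd : Sym2 V → V)

/-- Bend point of an edge of the first cycle. -/
def bend1 (e : Sym2 V) : ℝ × ℝ := ((X (tl e) : ℝ), (Y (hd e) : ℝ) - 1)

/-- Bend point of an edge of the second cycle. -/
def bend2 (e : Sym2 V) : ℝ × ℝ := ((X (hd e) : ℝ) - 1, (Y (tl e) : ℝ))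

/-- Edge drawing, first cycle. -/
def poly1 (e : Sym2 V) : Polyline :=
  poly3 (posXY X Y (tl e)) (bend1 X Y tl hd e) (posXY X Y (hd e))

/-- Edge drawing, second cycle. -/
def poly2 (e : Sym2 V) : Polyline :=
  poly3 (posXY X Y (tl e)) (bend2 X Y tl hd e) (posXY X Y (hd e))

variable {X Y tl hd} {e : Sym2 V} {z : ℝ × ℝ}

theorem onV1 (h : z ∈ segment ℝ (posXY X Y (tl e)) (bend1 X Y tl hd e)) :
    OnV (X (tl e)) (Y (tl e)) (Y (hd e)) z.1 z.2 := by
  obtain ⟨t, h0, h1, hx, hy⟩ := mem_seg_param h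
  simp only [posXY, bend1] at hx hy
  exact ⟨t, h0, h1, by rw [hx]; ring, by rw [hy]⟩

theorem onS1 (h : z ∈ segment ℝ (bend1 X Y tl hd e) (posXY X Y (hd e))) :
    OnS (X (tl e)) (X (hd e)) (Y (hd e)) z.1 z.2 := by
  obtain ⟨t, h0, h1, hx, hy⟩ := mem_seg_param h
  simp only [posXY, bend1] at hx hy
  exact ⟨t, h0, h1, by rw [hx], by rw [hy]; ring⟩

theorem onV2 (h : z ∈ segment ℝ (posXY X Y (tl e)) (bend2 X Y tl hd e)) :
    OnV (Y (tl e)) (X (tl e)) (X (hd e)) z.2 z.1 := by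
  obtain ⟨t, h0, h1, hx, hy⟩ := mem_seg_param h
  simp only [posXY, bend2] at hx hy
  exact ⟨t, h0, h1, by rw [hy]; ring, by rw [hx]⟩

theorem onS2 (h : z ∈ segment ℝ (bend2 X Y tl hd e) (posXY X Y (hd e))) :
    OnS (Y (tl e)) (Y (hd e)) (X (hd e)) z.2 z.1 := by
  obtain ⟨t, h0, h1, hx, hy⟩ := mem_seg_param h
  simp only [posXY, bend2] at hx hy
  exact ⟨t, h0, h1, by rw [hy], by rw [hx]; ring⟩

variable {C₁ C₂ : SimpleGraph V} {v0 : V} {n : ℕ} {tl' hd' : Sym2 V → V} {e' : Sym2 V}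

theorem planar1 (h₁ : CycDat C₁ v0 n X tl hd) (hY : Oth v0 Y)
    (he : e ∈ C₁.edgeSet) (he' : e' ∈ C₁.edgeSet) (hne : e ≠ e') :
    (poly1 X Y tl hd e).curve ∩ (poly1 X Y tl hd e').curve ⊆
      {p | ∃ v : V, v ∈ e ∧ v ∈ e' ∧ p = posXY X Y v} := by
  rintro z ⟨hz, hz'⟩
  obtain ⟨w, ha, hb, hc, hd⟩ := core_planar h₁ hY he he' hne
    ((poly3_curve hz).imp onV1 onS1) ((poly3_curve hz').imp onV1 onS1)
  exact ⟨w, ha, hb, Prod.ext hc hd⟩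

theorem planar2 (h₂ : CycDat C₂ v0 n Y tl hd) (hX : Oth v0 X)
    (he : e ∈ C₂.edgeSet) (he' : e' ∈ C₂.edgeSet) (hne : e ≠ e') :
    (poly2 X Y tl hd e).curve ∩ (poly2 X Y tl hd e').curve ⊆
      {p | ∃ v : V, v ∈ e ∧ v ∈ e' ∧ p = posXY X Y v} := by
  rintro z ⟨hz, hz'⟩
  obtain ⟨w, ha, hb, hc, hd⟩ := core_planar h₂ hX he he' hne
    ((poly3_curve hz).imp onV2 onS2) ((poly3_curve hz').imp onV2 onS2)
  exact ⟨w, ha, hb, Prod.ext hd hc⟩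

theorem sub_of_planar {P Q : Polyline} {f : V → ℝ × ℝ} (hne : e ≠ e')
    (h : P.curve ∩ Q.curve ⊆ {p | ∃ v : V, v ∈ e ∧ v ∈ e' ∧ p = f v})
    {s t} (hs : s ∈ P.segs) (ht : t ∈ Q.segs) :
    (segment ℝ s.1 s.2 ∩ segment ℝ t.1 t.2).Subsingleton := by
  rintro x ⟨hx, hx'⟩ y ⟨hy, hy'⟩
  obtain ⟨v, hv, hv', rfl⟩ := h ⟨seg_sub_curve hs hx, seg_sub_curve ht hx'⟩
  obtain ⟨w, hw, hw', rfl⟩ := h ⟨seg_sub_curve hs hy, seg_sub_curve ht hy'⟩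
  by_cases hvw : v = w
  · rw [hvw]
  · exact absurd (((Sym2.mem_and_mem_iff hvw).1 ⟨hv, hw⟩).trans
      ((Sym2.mem_and_mem_iff hvw).1 ⟨hv', hw'⟩).symm) hne

theorem sub12 (h₁ : CycDat C₁ v0 n X tl hd)
    {s t} (hs : s ∈ (poly1 X Y tl hd e).segs) (ht : t ∈ (poly2 X Y tl' hd' e').segs) :
    (segment ℝ s.1 s.2 ∩ segment ℝ t.1 t.2).Subsingleton := by
  rintro x ⟨hx, hx'⟩ y ⟨hy, hy'⟩
  rcases poly3_segs hs with rfl | rfl <;> rcases poly3_segs ht with rfl | rfl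
  · obtain ⟨_, _, _, a, _⟩ := onV1 hx
    obtain ⟨_, _, _, b, _⟩ := onV1 hy
    obtain ⟨_, _, _, c, _⟩ := onV2 hx'
    obtain ⟨_, _, _, d, _⟩ := onV2 hy'
    exact Prod.ext (by rw [a, b]) (by rw [c, d])
  · obtain ⟨_, _, _, a, _⟩ := onV1 hx
    obtain ⟨_, _, _, b, _⟩ := onV1 hy
    obtain ⟨s, _, _, c, c'⟩ := onS2 hx'
    obtain ⟨s', _, _, d, d'⟩ := onS2 hy'
    have : s = s' := by linarith
    subst this
    exact Prod.ext (by rw [a, b]) (by rw [c, d])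
  · obtain ⟨s, _, _, a, a'⟩ := onS1 hx
    obtain ⟨s', _, _, b, b'⟩ := onS1 hy
    obtain ⟨_, _, _, c, _⟩ := onV2 hx'
    obtain ⟨_, _, _, d, _⟩ := onV2 hy'
    have : s = s' := by linarith
    subst this
    exact Prod.ext (by rw [a, b]) (by rw [c, d])
  · obtain ⟨k, hk⟩ := h₁.even (tl e)
    obtain ⟨k', hk'⟩ := h₁.even (hd e)
    have := onS_onS_unique ⟨k' - k, by omega⟩ (onS1 hx) (onS2 hx') (onS1 hy) (onS2 hy')
    exact Prod.ext this.1 this.2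

theorem even_gap {a b : ℤ} (ha : ∃ k, a = 2 * k) (hb : ∃ k, b = 2 * k)
    {s : ℝ} (h0 : 0 < s) (h1 : s < 1) (h : (a : ℝ) = b - 1 + s) : False := by
  have e1 : a < b := by
    have : (a : ℝ) < b := by linarith
    exact_mod_cast this
  have e2 : b < a + 1 := by
    have : (b : ℝ) < a + 1 := by linarith
    exact_mod_cast this
  omega

theorem rac12 (h₁ : CycDat C₁ v0 n X tl hd) (h₂ : CycDat C₂ v0 n Y tl' hd')
    (he : e ∈ C₁.edgeSet) (he' : e' ∈ C₂.edgeSet)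
    {s t} (hs : s ∈ (poly1 X Y tl hd e).segs) (ht : t ∈ (poly2 X Y tl' hd' e').segs)
    (hc : SegCross s t) : SegPerp s t := by
  obtain ⟨z, hz, hz'⟩ := hc
  obtain ⟨a, a0, a1, ax, ay⟩ := mem_oseg_param hz
  obtain ⟨b, b0, b1, bx, yb⟩ := mem_oseg_param hz'
  rcases poly3_segs hs with rfl | rfl <;> rcases poly3_segs ht with rfl | rfl
  · simp [SegPerp, posXY, bend1, bend2]
  · exfalso
    simp only [posXY, bend1, bend2] at ax ay bx yb
    exact even_gap (h₁.even (tl e)) (h₁.even (hd' e')) b0 b1 (by linarith)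
  · exfalso
    simp only [posXY, bend1, bend2] at ax ay bx yb
    exact even_gap (h₂.even (tl' e')) (h₂.even (hd e)) a0 a1 (by linarith)
  · exfalso
    simp only [posXY, bend1, bend2] at ax ay bx yb
    exact no_cross_SS h₁ h₂ he he' a0 a1 b0 b1 (by linarith) (by linarith)

theorem SegPerp.symm {s t : (ℝ × ℝ) × (ℝ × ℝ)} (h : SegPerp s t) : SegPerp t s := by
  unfold SegPerp at *
  linarith

theorem SegCross.symm {s t : (ℝ × ℝ) × (ℝ × ℝ)} (h : SegCross s t) : SegCross t s := by
  unfold SegCross at *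
  rwa [Set.inter_comm]

theorem joins3 {f : V → ℝ × ℝ} {c : ℝ × ℝ} {a b p q : V} (h : s(a, b) = s(p, q)) :
    ((poly3 (f p) c (f q)).first = f a ∧ (poly3 (f p) c (f q)).last = f b) ∨
    ((poly3 (f p) c (f q)).first = f b ∧ (poly3 (f p) c (f q)).last = f a) := by
  rcases Sym2.eq_iff.1 h with ⟨rfl, rfl⟩ | ⟨rfl, rfl⟩
  · left; exact ⟨rfl, rfl⟩
  · right; exact ⟨rfl, rfl⟩

end drawing

/-- Two spanning cycles on a common set of `n ≥ 3` vertices admit a RacSim drawing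
on an integer grid of size `2n × 2n` with at most one bend per edge. -/
theorem racsim_cycle_cycle {V : Type} [Fintype V] (n : ℕ)
    (hcard : Fintype.card V = n) (hn : 3 ≤ n) (C₁ C₂ : SimpleGraph V)
    (h₁ : IsSpanningCycle C₁) (h₂ : IsSpanningCycle C₂) :
    ∃ D : SimDrawing ![C₁, C₂], D.IsRacSim ∧
      D.OnGrid (2 * (n : ℤ)) (2 * (n : ℤ)) ∧
      ∀ i : Fin 2, D.BendsAtMost i 1 := by
  have hV : Nonempty V := by
    rw [← Fintype.card_pos_iff]
    omega
  obtain ⟨v0⟩ := hV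
  obtain ⟨X, tl, hd, H₁⟩ := exists_cycDat n hcard C₁ h₁ v0
  obtain ⟨Y, tl', hd', H₂⟩ := exists_cycDat n hcard C₂ h₂ v0
  let D : SimDrawing ![C₁, C₂] :=
    { pos := posXY X Y
      pos_injective := by
        intro a b hab
        have h := congrArg Prod.fst hab
        simp only [posXY] at h
        exact H₁.inj (by exact_mod_cast h)
      poly := ![poly1 X Y tl hd, poly2 X Y tl' hd']
      joins := by
        intro i a b hab
        fin_cases i
        · exact joins3 (H₁.edge s(a, b) hab)
        · exact joins3 (H₂.edge s(a, b) hab) }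
  have hpl : D.PlanarEach := by
    intro i
    fin_cases i
    · intro e he e' he' hne
      exact planar1 H₁ H₂.oth he he' hne
    · intro e he e' he' hne
      exact planar2 H₂ H₁.oth he he' hne
  have hgp : ∀ v, OnGridPt (2 * (n : ℤ)) (2 * (n : ℤ)) (posXY X Y v) := fun v =>
    ⟨X v, Y v, rfl, by linarith [H₁.lo v], H₁.hi v, by linarith [H₂.lo v], H₂.hi v⟩
  refine ⟨D, ⟨hpl, ?_, ?_⟩, ⟨hgp, ?_⟩, ?_⟩
  · intro i e he j e' he' hor s hs t ht
    by_cases hij : i = j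
    · subst hij
      have hne : e ≠ e' := hor.resolve_left (fun h => h rfl)
      exact sub_of_planar hne (hpl i e he e' he' hne) hs ht
    · fin_cases i <;> fin_cases j
      · exact absurd rfl hij
      · exact sub12 H₁ hs ht
      · rw [Set.inter_comm]
        exact sub12 H₁ ht hs
      · exact absurd rfl hij
  · intro i j hij e he e' he' s hs t ht hc
    fin_cases i <;> fin_cases j
    · exact absurd rfl hij
    · exact rac12 H₁ H₂ he he' hs ht hc
    · exact (rac12 H₁ H₂ he' he ht hs hc.symm).symm
    · exact absurd rfl hij
  · intro i
    fin_cases i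
    · intro e he k
      change Fin 3 at k
      fin_cases k
      · exact hgp (tl e)
      · exact ⟨X (tl e), Y (hd e) - 1, by
          change bend1 X Y tl hd e = _
          simp [bend1], by linarith [H₁.lo (tl e)], H₁.hi _,
          by linarith [H₂.lo (hd e)], by linarith [H₂.hi (hd e)]⟩
      · exact hgp (hd e)
    · intro e he k
      change Fin 3 at k
      fin_cases k
      · exact hgp (tl' e)
      · exact ⟨X (hd' e) - 1, Y (tl' e), by
          change bend2 X Y tl' hd' e = _
          simp [bend2], by linarith [H₁.lo (hd' e)], by linarith [H₁.hi (hd' e)],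
          by linarith [H₂.lo (tl' e)], H₂.hi _⟩
      · exact hgp (hd' e)
  · intro i
    fin_cases i
    · intro e he
      exact le_refl 2
    · intro e he
      exact le_refl 2
end

section
/- For every caterpillar A=(V,E_A) and every spanning cycle C=(V,E_C) on a common set V of n ≥ 3 vertices, there exists a RacSim drawing of A and C on an integer grid of size (2n−1)×2n in which every edge of both graphs is drawn with at most one bend. -/
open SimpleGraph

/-- A graph is a (possibly empty) path: either it has no vertices, or it is
connected, has maximum degree at most 2, and has a vertex of degree at most 1
(which rules out cycles). -/
def IsPathOrEmptyGraph {W : Type} (H : SimpleGraph W) : Prop :=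
  IsEmpty W ∨ (H.Connected ∧ (∀ v : W, vdeg H v ≤ 2) ∧ ∃ v : W, vdeg H v ≤ 1)

/-- A caterpillar: a tree in which deleting all leaves (vertices of degree 1)
yields a (possibly empty) path. -/
def IsCaterpillar {V : Type} (G : SimpleGraph V) : Prop :=
  G.IsTree ∧ IsPathOrEmptyGraph (G.induce {v : V | vdeg G v ≠ 1})

/-- Combinatorial layout data: column index `k`, row index `r`, parents `par` in the caterpillar
rooted at `root`, and the set `spec` of special leaves placed right below their parent. -/
structure Lay (V : Type) (n : ℕ) where
  k : V → ℕ
  r : V → ℕ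
  par : V → V
  root : V
  spec : V → Prop
  k_lt : ∀ v, k v < n
  r_lt : ∀ v, r v < n
  k_inj : ∀ u v, k u = k v → u = v
  r_inj : ∀ u v, r u = r v → u = v
  k_root : k root = 0
  r_root : r root = 0
  spec_k : ∀ c, spec c → k c = k (par c) + 1
  spec_r : ∀ c, spec c → r (par c) = r c + 1
  spec_np : ∀ c, spec c → ∀ d, d ≠ root → par d ≠ c
  spec_root : ¬ spec root
  reg_r : ∀ d, d ≠ root → ¬ spec d → r (par d) < r d
  fan_spine : ∀ d d', d ≠ root → ¬ spec d → d' ≠ root →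
    ¬ (r (par d) < r (par d') ∧ r (par d') < r d)
  fan_next : ∀ d w, d ≠ root → ¬ spec d → k w = k (par d) + 1 →
    ¬ (r (par d) < r w ∧ r w < r d)

namespace Lay

variable {V : Type} {n : ℕ} (L : Lay V n)

/-- x-coordinate -/
noncomputable def x (v : V) : ℝ := 2 * (L.k v : ℝ) + 1
/-- y-coordinate -/
noncomputable def y (v : V) : ℝ := 2 * (L.r v : ℝ) + 1
/-- placement -/
noncomputable def P (v : V) : ℝ × ℝ := (L.x v, L.y v)

open Classical in
/-- bend point of the caterpillar edge from `par d` to `d` -/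
noncomputable def bA (d : V) : ℝ × ℝ :=
  if L.spec d then (L.x (L.par d) + 1, L.y d + 1)
  else if L.k (L.par d) < L.k d then (L.x (L.par d) + 1, L.y d)
  else (L.x (L.par d) - 1, L.y d)

/-- bend point of the cycle edge from `v` to `w` -/
noncomputable def bC (v w : V) : ℝ × ℝ :=
  if L.k w = L.k v + 1 then (L.x v, L.y w + 1) else (L.x v, L.y w)

theorem x_lt {u v : V} (h : L.k u < L.k v) : L.x u + 2 ≤ L.x v := by
  have : (L.k u : ℝ) + 1 ≤ L.k v := by exact_mod_cast h
  unfold x; linarith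

theorem y_lt {u v : V} (h : L.r u < L.r v) : L.y u + 2 ≤ L.y v := by
  have : (L.r u : ℝ) + 1 ≤ L.r v := by exact_mod_cast h
  unfold y; linarith

theorem y_le {u v : V} (h : L.r u ≤ L.r v) : L.y u ≤ L.y v := by
  have : (L.r u : ℝ) ≤ L.r v := by exact_mod_cast h
  unfold y; linarith

theorem x_tri (u v : V) : L.x u + 2 ≤ L.x v ∨ u = v ∨ L.x v + 2 ≤ L.x u := by
  rcases lt_trichotomy (L.k u) (L.k v) with h | h | h
  · exact Or.inl (L.x_lt h)
  · exact Or.inr (Or.inl (L.k_inj _ _ h))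
  · exact Or.inr (Or.inr (L.x_lt h))

theorem y_tri (u v : V) : L.y u + 2 ≤ L.y v ∨ u = v ∨ L.y v + 2 ≤ L.y u := by
  rcases lt_trichotomy (L.r u) (L.r v) with h | h | h
  · exact Or.inl (L.y_lt h)
  · exact Or.inr (Or.inl (L.r_inj _ _ h))
  · exact Or.inr (Or.inr (L.y_lt h))

theorem x_succ {v w : V} (h : L.k w = L.k v + 1) : L.x w = L.x v + 2 := by
  unfold x; rw [h]; push_cast; ring

theorem y_succ {v w : V} (h : L.r w = L.r v + 1) : L.y w = L.y v + 2 := by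
  unfold y; rw [h]; push_cast; ring

theorem x_root : L.x L.root = 1 := by unfold x; rw [L.k_root]; norm_num
theorem y_root : L.y L.root = 1 := by unfold y; rw [L.r_root]; norm_num

theorem y_nonroot {v : V} (h : v ≠ L.root) : 3 ≤ L.y v := by
  have h1 : 0 < L.r v := by
    rcases Nat.eq_zero_or_pos (L.r v) with h0 | h0
    · exact absurd (L.r_inj v L.root (by rw [h0, L.r_root])) h
    · exact h0
  have := L.y_lt (u := L.root) (v := v) (by rw [L.r_root]; exact h1)
  rw [L.y_root] at this; linarith

theorem x_ge (v : V) : 1 ≤ L.x v := by unfold x; have : (0:ℝ) ≤ L.k v := by positivity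
                                       linarith
theorem y_ge (v : V) : 1 ≤ L.y v := by unfold y; have : (0:ℝ) ≤ L.r v := by positivity
                                       linarith

/-- rows differ by parity from the even heights used by cycle bends -/
theorem y_even (u v : V) : L.y u ≠ L.y v + 1 := by
  rcases L.y_tri u v with h | h | h
  · linarith
  · subst h; linarith
  · intro h'; linarith

theorem P_inj : Function.Injective L.P := by
  intro u v h
  have h1 : L.x u = L.x v := congrArg Prod.fst h
  rcases L.x_tri u v with h | h | h
  · linarith
  · exact h
  · linarith

theorem P_eq {z : ℝ × ℝ} {v : V} (h1 : z.1 = L.x v) (h2 : z.2 = L.y v) : z = L.P v :=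
  Prod.ext h1 h2

theorem mem_seg {z a b : ℝ × ℝ} (h : z ∈ segment ℝ a b) :
    ∃ t : ℝ, 0 ≤ t ∧ t ≤ 1 ∧ z.1 = a.1 + t * (b.1 - a.1) ∧ z.2 = a.2 + t * (b.2 - a.2) := by
  rw [segment_eq_image'] at h
  obtain ⟨t, ⟨h0, h1⟩, rfl⟩ := h
  exact ⟨t, h0, h1, by simp, by simp⟩

/-- points on the first segment of a regular caterpillar edge -/
def Fan (d : V) (z : ℝ × ℝ) : Prop := ∃ t : ℝ, 0 ≤ t ∧ t ≤ 1 ∧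
  z.2 = L.y (L.par d) + t * (L.y d - L.y (L.par d)) ∧
  ((L.x (L.par d) + 2 ≤ L.x d ∧ z.1 = L.x (L.par d) + t) ∨
   (L.x d + 2 ≤ L.x (L.par d) ∧ z.1 = L.x (L.par d) - t))

/-- points on the second segment of a regular caterpillar edge -/
def Hor (d : V) (z : ℝ × ℝ) : Prop := z.2 = L.y d ∧
  ((L.x (L.par d) + 2 ≤ L.x d ∧ L.x (L.par d) + 1 ≤ z.1 ∧ z.1 ≤ L.x d) ∨
   (L.x d + 2 ≤ L.x (L.par d) ∧ L.x d ≤ z.1 ∧ z.1 ≤ L.x (L.par d) - 1))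

/-- points on the first half of a special caterpillar edge -/
def Sp1 (d : V) (z : ℝ × ℝ) : Prop := ∃ t : ℝ, 0 ≤ t ∧ t ≤ 1 ∧
  z.1 = L.x (L.par d) + t ∧ z.2 = L.y (L.par d) - t

/-- points on the second half of a special caterpillar edge -/
def Sp2 (d : V) (z : ℝ × ℝ) : Prop := ∃ t : ℝ, 0 ≤ t ∧ t ≤ 1 ∧
  z.1 = L.x (L.par d) + 2 - t ∧ z.2 = L.y (L.par d) - 2 + t

theorem fan_of_mem {d : V} (hd : d ≠ L.root) (hs : ¬ L.spec d) {z : ℝ × ℝ}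
    (h : z ∈ segment ℝ (L.P (L.par d)) (L.bA d)) : L.Fan d z := by
  obtain ⟨t, h0, h1, h2, h3⟩ := mem_seg h
  have hr := L.reg_r d hd hs
  refine ⟨t, h0, h1, ?_, ?_⟩
  · rw [h3]; unfold bA P; rw [if_neg hs]; split_ifs <;> rfl
  · by_cases hk : L.k (L.par d) < L.k d
    · left
      refine ⟨L.x_lt hk, ?_⟩
      rw [h2]; unfold bA P; rw [if_neg hs, if_pos hk]; simp
    · right
      refine ⟨?_, ?_⟩
      · apply L.x_lt
        rcases Nat.lt_or_ge (L.k d) (L.k (L.par d)) with h | h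
        · exact h
        · have := L.k_inj d (L.par d) (by omega)
          rw [← this] at hr; omega
      · rw [h2]; unfold bA P; rw [if_neg hs, if_neg hk]; simp; ring

theorem hor_of_mem {d : V} (hd : d ≠ L.root) (hs : ¬ L.spec d) {z : ℝ × ℝ}
    (h : z ∈ segment ℝ (L.bA d) (L.P d)) : L.Hor d z := by
  obtain ⟨t, h0, h1, h2, h3⟩ := mem_seg h
  have hr := L.reg_r d hd hs
  refine ⟨?_, ?_⟩
  · rw [h3]; unfold bA P; rw [if_neg hs]; split_ifs <;> simp
  · by_cases hk : L.k (L.par d) < L.k d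
    · left
      have hx := L.x_lt hk
      refine ⟨hx, ?_⟩
      rw [h2]; unfold bA P; rw [if_neg hs, if_pos hk]
      constructor <;> simp only <;> nlinarith
    · right
      have hx : L.x d + 2 ≤ L.x (L.par d) := by
        apply L.x_lt
        rcases Nat.lt_or_ge (L.k d) (L.k (L.par d)) with h | h
        · exact h
        · have := L.k_inj d (L.par d) (by omega)
          rw [← this] at hr; omega
      refine ⟨hx, ?_⟩
      rw [h2]; unfold bA P; rw [if_neg hs, if_neg hk]
      constructor <;> simp only <;> nlinarith

theorem sp1_of_mem {d : V} (hs : L.spec d) {z : ℝ × ℝ}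
    (h : z ∈ segment ℝ (L.P (L.par d)) (L.bA d)) : L.Sp1 d z := by
  obtain ⟨t, h0, h1, h2, h3⟩ := mem_seg h
  have e := L.y_succ (L.spec_r d hs)
  unfold bA P at h2 h3
  rw [if_pos hs] at h2 h3
  refine ⟨t, h0, h1, ?_, ?_⟩
  · rw [h2]; simp
  · rw [h3, e]; simp only; ring

theorem sp2_of_mem {d : V} (hs : L.spec d) {z : ℝ × ℝ}
    (h : z ∈ segment ℝ (L.bA d) (L.P d)) : L.Sp2 d z := by
  obtain ⟨t, h0, h1, h2, h3⟩ := mem_seg h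
  have e := L.y_succ (L.spec_r d hs)
  have e' := L.x_succ (L.spec_k d hs)
  unfold bA P at h2 h3
  rw [if_pos hs] at h2 h3
  refine ⟨1 - t, by linarith, by linarith, ?_, ?_⟩
  · rw [h2, e']; simp only; ring
  · rw [h3, e]; simp only; ring

/-- points on the slanted segment of a cycle edge -/
def Sl (v w : V) (z : ℝ × ℝ) : Prop := ∃ t : ℝ, 0 ≤ t ∧ t ≤ 1 ∧
  z.1 = L.x v + 2 * t ∧ z.2 = L.y w + 1 - t

theorem ver_of_mem {v w : V} {z : ℝ × ℝ}
    (h : z ∈ segment ℝ (L.P v) (L.bC v w)) : z.1 = L.x v := by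
  obtain ⟨t, h0, h1, h2, h3⟩ := mem_seg h
  unfold bC P at h2
  rw [h2]; split_ifs <;> simp

theorem ver_of_mem' {v w : V} (hk : L.k w = L.k v + 1) {z : ℝ × ℝ}
    (h : z ∈ segment ℝ (L.P v) (L.bC v w)) :
    ∃ t : ℝ, 0 ≤ t ∧ t ≤ 1 ∧ z.2 = L.y v + t * (L.y w + 1 - L.y v) := by
  obtain ⟨t, h0, h1, h2, h3⟩ := mem_seg h
  unfold bC P at h3
  rw [if_pos hk] at h3
  exact ⟨t, h0, h1, h3⟩

theorem sl_of_mem {v w : V} (hk : L.k w = L.k v + 1) {z : ℝ × ℝ}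
    (h : z ∈ segment ℝ (L.bC v w) (L.P w)) : L.Sl v w z := by
  obtain ⟨t, h0, h1, h2, h3⟩ := mem_seg h
  have e' := L.x_succ hk
  unfold bC P at h2 h3
  rw [if_pos hk] at h2 h3
  refine ⟨t, h0, h1, ?_, ?_⟩
  · rw [h2, e']; simp only; ring
  · rw [h3]; simp only; ring

theorem clo_of_mem {v w : V} (hv : L.k v + 1 = n) (hw : L.k w = 0) {z : ℝ × ℝ}
    (h : z ∈ segment ℝ (L.bC v w) (L.P w)) : z.2 = 1 := by
  obtain ⟨t, h0, h1, h2, h3⟩ := mem_seg h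
  have hk : ¬ L.k w = L.k v + 1 := by omega
  have e : w = L.root := L.k_inj _ _ (by rw [hw, L.k_root])
  unfold bC P at h3
  rw [if_neg hk] at h3
  rw [h3, e, L.y_root]; simp

/-- points of a caterpillar edge -/
def onA (d : V) (z : ℝ × ℝ) : Prop :=
  z ∈ segment ℝ (L.P (L.par d)) (L.bA d) ∨ z ∈ segment ℝ (L.bA d) (L.P d)

theorem reg_range {d : V} (hd : d ≠ L.root) (hs : ¬ L.spec d) {z : ℝ × ℝ} (h : L.onA d z) :
    L.y (L.par d) ≤ z.2 ∧ z.2 ≤ L.y d ∧ (z.2 = L.y (L.par d) → z = L.P (L.par d)) := by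
  have hy := L.y_lt (L.reg_r d hd hs)
  rcases h with h | h
  · obtain ⟨t, h0, h1, h2, h3⟩ := L.fan_of_mem hd hs h
    refine ⟨by nlinarith, by nlinarith, fun e => ?_⟩
    have : t = 0 := by
      have : t * (L.y d - L.y (L.par d)) = 0 := by linarith
      rcases mul_eq_zero.mp this with h | h
      · exact h
      · linarith
    subst this
    apply L.P_eq
    · rcases h3 with h | h <;> linarith [h.2]
    · exact e
  · obtain ⟨h2, -⟩ := L.hor_of_mem hd hs h
    exact ⟨by linarith, by linarith, fun e => by linarith⟩

theorem spec_range {d : V} (hs : L.spec d) {z : ℝ × ℝ} (h : L.onA d z) :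
    L.x (L.par d) ≤ z.1 ∧ z.1 ≤ L.x (L.par d) + 2 ∧ 
    L.y (L.par d) - 2 ≤ z.2 ∧ z.2 ≤ L.y (L.par d) ∧
    (z.2 = L.y (L.par d) → z = L.P (L.par d)) := by
  rcases h with h | h
  · obtain ⟨t, h0, h1, h2, h3⟩ := L.sp1_of_mem hs h
    exact ⟨by linarith, by linarith, by linarith, by linarith, fun e =>
      L.P_eq (by linarith) (by linarith)⟩
  · obtain ⟨t, h0, h1, h2, h3⟩ := L.sp2_of_mem hs h
    exact ⟨by linarith, by linarith, by linarith, by linarith, fun e => by linarith⟩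

theorem planar_rr {d d' : V} (hd : d ≠ L.root) (hs : ¬ L.spec d) (hd' : d' ≠ L.root)
    (hs' : ¬ L.spec d') (hr : L.r (L.par d) < L.r (L.par d')) {z : ℝ × ℝ}
    (h : L.onA d z) (h' : L.onA d' z) :
    d = L.par d' ∧ z = L.P d := by
  have h1 := L.reg_range hd hs h
  have h2 := L.reg_range hd' hs' h'
  have h3 := L.fan_spine d d' hd hs hd'
  rcases L.y_tri d (L.par d') with h4 | h4 | h4
  · linarith
  · refine ⟨h4, ?_⟩
    have := h2.2.2 (by rw [← h4] at h2 ⊢; linarith)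
    rw [this, h4]
  · exfalso
    apply h3 ⟨hr, ?_⟩
    by_contra h5
    have := L.y_le (u := d) (v := L.par d') (by omega)
    linarith

theorem planar_rr_same {d d' : V} (hd : d ≠ L.root) (hs : ¬ L.spec d) (hd' : d' ≠ L.root)
    (hs' : ¬ L.spec d') (hp : L.par d = L.par d') (hne : d ≠ d') {z : ℝ × ℝ}
    (h : L.onA d z) (h' : L.onA d' z) :
    z = L.P (L.par d) := by
  have hy := L.y_lt (L.reg_r d hd hs)
  have hy' := L.y_lt (L.reg_r d' hd' hs')
  have hyy : L.y d ≠ L.y d' := by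
    rcases L.y_tri d d' with h | h | h
    · intro h'; linarith
    · exact absurd h hne
    · intro h'; linarith
  rcases h with h | h <;> rcases h' with h' | h'
  · obtain ⟨t, h0, h1, h2, h3⟩ := L.fan_of_mem hd hs h
    obtain ⟨t', h0', h1', h2', h3'⟩ := L.fan_of_mem hd' hs' h'
    rw [← hp] at h2' h3' hy'
    have ht : t = t' := by
      rcases h3 with h3 | h3 <;> rcases h3' with h3' | h3' <;> linarith
    subst ht
    have : t * (L.y d - L.y d') = 0 := by linarith
    rcases mul_eq_zero.mp this with h | h
    · subst h
      exact L.P_eq (by rcases h3 with h | h <;> linarith [h.2]) (by linarith)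
    · exact absurd (by linarith) hyy
  · obtain ⟨t, h0, h1, h2, h3⟩ := L.fan_of_mem hd hs h
    obtain ⟨h2', h3'⟩ := L.hor_of_mem hd' hs' h'
    rw [← hp] at h3' hy'
    have ht : t = 1 := by
      rcases h3 with h3 | h3 <;> rcases h3' with h3' | h3' <;> linarith
    subst ht
    exact absurd (by linarith) hyy
  · obtain ⟨t, h0, h1, h2, h3⟩ := L.fan_of_mem hd' hs' h'
    obtain ⟨h2', h3'⟩ := L.hor_of_mem hd hs h
    rw [hp] at h3' hy
    have ht : t = 1 := by
      rcases h3 with h3 | h3 <;> rcases h3' with h3' | h3' <;> linarith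
    subst ht
    exact absurd (by linarith) hyy
  · obtain ⟨h2, h3⟩ := L.hor_of_mem hd hs h
    obtain ⟨h2', h3'⟩ := L.hor_of_mem hd' hs' h'
    exact absurd (by linarith) hyy

theorem ne_root_of_spec {c : V} (hs : L.spec c) : c ≠ L.root := by
  rintro rfl; exact L.spec_root hs

theorem planar_sr {c d : V} (hc : L.spec c) (hd : d ≠ L.root) (hs : ¬ L.spec d) {z : ℝ × ℝ}
    (h : L.onA c z) (h' : L.onA d z) :
    (L.par d = L.par c ∨ d = L.par c) ∧ z = L.P (L.par c) := by
  have h1 := L.spec_range hc h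
  have h2 := L.reg_range hd hs h'
  have ec := L.y_succ (L.spec_r c hc)
  have ex := L.x_succ (L.spec_k c hc)
  have hroot := L.ne_root_of_spec hc
  by_cases hp : L.par d = L.par c
  · refine ⟨Or.inl hp, h1.2.2.2.2 ?_⟩
    rw [hp] at h2; linarith
  · have h3 := L.fan_spine d c hd hs hroot
    have h4 : L.r (L.par d) ≠ L.r (L.par c) := fun e => hp (L.r_inj _ _ e)
    have h5 : ¬ L.r (L.par c) < L.r (L.par d) := by
      intro h; have := L.y_lt h; linarith
    have h6 : L.r d ≤ L.r (L.par c) := by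
      by_contra h; exact h3 ⟨by omega, by omega⟩
    rcases h' with h' | h'
    · exfalso
      obtain ⟨t, h0, h1', h2', h3'⟩ := L.fan_of_mem hd hs h'
      have hpc := L.spec_np c hc d hd
      rcases L.x_tri (L.par d) (L.par c) with h7 | h7 | h7
      · rcases h3' with h8 | h8 <;> linarith
      · exact hp h7
      · rcases L.x_tri (L.par d) c with h9 | h9 | h9
        · linarith
        · exact hpc h9
        · rcases h3' with h8 | h8 <;> linarith
    · obtain ⟨h7, -⟩ := L.hor_of_mem hd hs h'
      rcases L.y_tri d c with h8 | h8 | h8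
      · linarith
      · subst h8; exact absurd hc hs
      · have h9 := L.y_le h6
        have : d = L.par c := by
          rcases L.y_tri d (L.par c) with h10 | h10 | h10
          · linarith
          · exact h10
          · linarith
        exact ⟨Or.inr this, h1.2.2.2.2 (by rw [h7, this])⟩

theorem planar_ss {c d : V} (hc : L.spec c) (hd : L.spec d) (hne : c ≠ d) {z : ℝ × ℝ}
    (h : L.onA c z) (h' : L.onA d z) : False := by
  have h1 := L.spec_range hc h
  have h2 := L.spec_range hd h'
  have hp : L.par c ≠ L.par d := by
    intro e
    exact hne (L.k_inj _ _ (by rw [L.spec_k c hc, L.spec_k d hd, e]))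
  have a1 := L.spec_np c hc d (L.ne_root_of_spec hd)
  have a2 := L.spec_np d hd c (L.ne_root_of_spec hc)
  have ec := L.y_succ (L.spec_r c hc)
  have ed := L.y_succ (L.spec_r d hd)
  rcases L.y_tri (L.par c) (L.par d) with h3 | h3 | h3
  · rcases L.y_tri (L.par c) d with h4 | h4 | h4
    · linarith
    · exact a2 h4
    · linarith
  · exact hp h3
  · rcases L.y_tri (L.par d) c with h4 | h4 | h4
    · linarith
    · exact a1 h4
    · linarith

theorem planarA {d d' : V} (hd : d ≠ L.root) (hd' : d' ≠ L.root) (hne : d ≠ d') {z : ℝ × ℝ}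
    (h : L.onA d z) (h' : L.onA d' z) :
    ∃ v, (v = L.par d ∨ v = d) ∧ (v = L.par d' ∨ v = d') ∧ z = L.P v := by
  by_cases hs : L.spec d <;> by_cases hs' : L.spec d'
  · exact (L.planar_ss hs hs' hne h h').elim
  · obtain ⟨h1, h2⟩ := L.planar_sr hs hd' hs' h h'
    exact ⟨_, Or.inl rfl, by rcases h1 with h1 | h1 <;> simp [h1], h2⟩
  · obtain ⟨h1, h2⟩ := L.planar_sr hs' hd hs h' h
    exact ⟨_, by rcases h1 with h1 | h1 <;> simp [h1], Or.inl rfl, h2⟩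
  · rcases lt_trichotomy (L.r (L.par d)) (L.r (L.par d')) with h1 | h1 | h1
    · obtain ⟨h2, h3⟩ := L.planar_rr hd hs hd' hs' h1 h h'
      exact ⟨d, Or.inr rfl, Or.inl h2, h3⟩
    · have h2 := L.r_inj _ _ h1
      exact ⟨_, Or.inl rfl, Or.inl h2, L.planar_rr_same hd hs hd' hs' h2 hne h h'⟩
    · obtain ⟨h2, h3⟩ := L.planar_rr hd' hs' hd hs h1 h' h
      exact ⟨d', Or.inl h2, Or.inr rfl, h3⟩

/-- `(v, w)` is a cycle edge in the layout. -/
def CE (v w : V) : Prop := L.k w = L.k v + 1 ∨ (L.k v + 1 = n ∧ L.k w = 0)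

/-- points of a cycle edge -/
def onC (v w : V) (z : ℝ × ℝ) : Prop :=
  z ∈ segment ℝ (L.P v) (L.bC v w) ∨ z ∈ segment ℝ (L.bC v w) (L.P w)

theorem c_range {v w : V} (hk : L.k w = L.k v + 1) {z : ℝ × ℝ} (h : L.onC v w z) :
    L.x v ≤ z.1 ∧ z.1 ≤ L.x w ∧ (z.1 = L.x w → z = L.P w) := by
  have e := L.x_succ hk
  rcases h with h | h
  · have := L.ver_of_mem h
    exact ⟨by linarith, by linarith, fun _ => by linarith⟩
  · obtain ⟨t, h0, h1, h2, h3⟩ := L.sl_of_mem hk h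
    exact ⟨by linarith, by linarith, fun e' => L.P_eq e' (by linarith)⟩

theorem planar_c1 {v w v' w' : V} (hk : L.k w = L.k v + 1) (hk' : L.k w' = L.k v' + 1)
    (hlt : L.k v < L.k v') {z : ℝ × ℝ} (h : L.onC v w z) (h' : L.onC v' w' z) :
    w = v' ∧ z = L.P w := by
  have h1 := L.c_range hk h
  have h2 := L.c_range hk' h'
  have e := L.x_succ hk
  have e' := L.x_lt hlt
  have : w = v' := by
    rcases L.x_tri w v' with h | h | h
    · linarith
    · exact h
    · linarith
  refine ⟨this, h1.2.2 ?_⟩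
  rw [← this] at h2; linarith

theorem planar_c2 {v w v' w' : V} (hk : L.k w = L.k v + 1) (hk' : L.k v' + 1 = n)
    (hw' : L.k w' = 0) {z : ℝ × ℝ} (h : L.onC v w z) (h' : L.onC v' w' z) :
    (w = v' ∧ z = L.P w) ∨ (v = w' ∧ z = L.P v) := by
  have h1 := L.c_range hk h
  have e := L.x_succ hk
  have ew : w ≠ L.root := by
    intro e; rw [e, L.k_root] at hk; omega
  have ey := L.y_nonroot ew
  rcases h' with h' | h'
  · left
    have h2 := L.ver_of_mem h'
    have : w = v' := by
      rcases L.x_tri w v' with h | h | h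
      · linarith
      · exact h
      · have := L.k_lt w
        have hle : L.k w ≤ L.k v' := by omega
        have : (L.k w : ℝ) ≤ L.k v' := by exact_mod_cast hle
        unfold x at h; linarith
    exact ⟨this, h1.2.2 (by rw [h2, this])⟩
  · right
    have h2 := L.clo_of_mem hk' hw' h'
    have er : w' = L.root := L.k_inj _ _ (by rw [hw', L.k_root])
    rcases h with h | h
    · obtain ⟨t, h0, h1', h3⟩ := L.ver_of_mem' hk h
      have : v = L.root := by
        by_contra hv
        have := L.y_nonroot hv
        nlinarith
      refine ⟨by rw [this, er], L.P_eq (L.ver_of_mem h) ?_⟩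
      rw [h2, this, L.y_root]
    · obtain ⟨t, h0, h1', h3, h4⟩ := L.sl_of_mem hk h
      linarith

theorem planarC {v w v' w' : V} (hc : L.CE v w) (hc' : L.CE v' w') (hne : v ≠ v')
    {z : ℝ × ℝ} (h : L.onC v w z) (h' : L.onC v' w' z) :
    ∃ u, (u = v ∨ u = w) ∧ (u = v' ∨ u = w') ∧ z = L.P u := by
  rcases hc with hk | ⟨hk, hw⟩ <;> rcases hc' with hk' | ⟨hk', hw'⟩
  · rcases lt_trichotomy (L.k v) (L.k v') with h1 | h1 | h1
    · obtain ⟨h2, h3⟩ := L.planar_c1 hk hk' h1 h h'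
      exact ⟨w, Or.inr rfl, Or.inl h2, h3⟩
    · exact absurd (L.k_inj _ _ h1) hne
    · obtain ⟨h2, h3⟩ := L.planar_c1 hk' hk h1 h' h
      exact ⟨w', Or.inl h2, Or.inr rfl, h3⟩
  · rcases L.planar_c2 hk hk' hw' h h' with ⟨h2, h3⟩ | ⟨h2, h3⟩
    · exact ⟨w, Or.inr rfl, Or.inl h2, h3⟩
    · exact ⟨v, Or.inl rfl, Or.inr h2, h3⟩
  · rcases L.planar_c2 hk' hk hw h' h with ⟨h2, h3⟩ | ⟨h2, h3⟩
    · exact ⟨w', Or.inl h2, Or.inr rfl, h3⟩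
    · exact ⟨v', Or.inr h2, Or.inl rfl, h3⟩
  · exact absurd (L.k_inj _ _ (by omega)) hne

/-- The pair of segments meets in at most one point, and if it crosses then perpendicularly. -/
def Good (s t : (ℝ × ℝ) × (ℝ × ℝ)) : Prop :=
  (segment ℝ s.1 s.2 ∩ segment ℝ t.1 t.2).Subsingleton ∧ (SegCross s t → SegPerp s t)

theorem good_of_hv {s t : (ℝ × ℝ) × (ℝ × ℝ)} (hs : s.1.2 = s.2.2) (ht : t.1.1 = t.2.1) :
    Good s t := by
  constructor
  · rintro p ⟨hp, hp'⟩ q ⟨hq, hq'⟩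
    obtain ⟨_, _, _, _, a⟩ := mem_seg hp
    obtain ⟨_, _, _, b, _⟩ := mem_seg hp'
    obtain ⟨_, _, _, _, c⟩ := mem_seg hq
    obtain ⟨_, _, _, d, _⟩ := mem_seg hq'
    rw [hs] at a c
    rw [ht] at b d
    simp only [sub_self, mul_zero, add_zero] at a b c d
    exact Prod.ext (by rw [b, d]) (by rw [a, c])
  · intro _
    unfold SegPerp
    rw [hs, ht]; ring

theorem good_left {s t : (ℝ × ℝ) × (ℝ × ℝ)} (z : ℝ × ℝ) (hz : z = s.1 ∨ z = s.2)
    (hne : s.1 ≠ s.2)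
    (h : ∀ p, p ∈ segment ℝ s.1 s.2 → p ∈ segment ℝ t.1 t.2 → p = z) : Good s t := by
  constructor
  · rintro p ⟨hp, hp'⟩ q ⟨hq, hq'⟩
    rw [h p hp hp', h q hq hq']
  · rintro ⟨p, hp, hp'⟩
    have := h p (openSegment_subset_segment _ _ _ hp) (openSegment_subset_segment _ _ _ hp')
    exfalso
    rw [this] at hp
    rcases hz with hz | hz
    · rw [hz, left_mem_openSegment_iff] at hp; exact hne hp
    · rw [hz, right_mem_openSegment_iff] at hp; exact hne hp

theorem good_right {s t : (ℝ × ℝ) × (ℝ × ℝ)} (z : ℝ × ℝ) (hz : z = t.1 ∨ z = t.2)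
    (hne : t.1 ≠ t.2)
    (h : ∀ p, p ∈ segment ℝ s.1 s.2 → p ∈ segment ℝ t.1 t.2 → p = z) : Good s t := by
  constructor
  · rintro p ⟨hp, hp'⟩ q ⟨hq, hq'⟩
    rw [h p hp hp', h q hq hq']
  · rintro ⟨p, hp, hp'⟩
    have := h p (openSegment_subset_segment _ _ _ hp) (openSegment_subset_segment _ _ _ hp')
    exfalso
    rw [this] at hp'
    rcases hz with hz | hz
    · rw [hz, left_mem_openSegment_iff] at hp'; exact hne hp'
    · rw [hz, right_mem_openSegment_iff] at hp'; exact hne hp'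

theorem bA_ne1 (d : V) : L.P (L.par d) ≠ L.bA d := by
  intro h
  have := congrArg Prod.fst h
  unfold P bA at this
  split_ifs at this <;> simp at this <;> linarith

theorem bA_ne2 {d : V} (hs : L.spec d) : L.bA d ≠ L.P d := by
  intro h
  have := congrArg Prod.snd h
  unfold P bA at this
  rw [if_pos hs] at this
  simp at this

theorem bC_ne2 {v w : V} (hk : L.k w = L.k v + 1) : L.bC v w ≠ L.P w := by
  intro h
  have := congrArg Prod.snd h
  unfold P bC at this
  rw [if_pos hk] at this
  simp at this

theorem bC_ver (v w : V) : (L.P v).1 = (L.bC v w).1 := by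
  unfold P bC; split_ifs <;> rfl

theorem bA_hor {d : V} (hs : ¬ L.spec d) : (L.bA d).2 = (L.P d).2 := by
  unfold P bA; rw [if_neg hs]; split_ifs <;> rfl

theorem fan_at {d : V} {z : ℝ × ℝ} {t : ℝ} 
    (h2 : z.2 = L.y (L.par d) + t * (L.y d - L.y (L.par d)))
    (h3 : (L.x (L.par d) + 2 ≤ L.x d ∧ z.1 = L.x (L.par d) + t) ∨
      (L.x d + 2 ≤ L.x (L.par d) ∧ z.1 = L.x (L.par d) - t)) (ht : t = 0) :
    z = L.P (L.par d) := by
  subst ht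
  exact L.P_eq (by rcases h3 with h | h <;> linarith [h.2]) (by linarith)

theorem good_fan_ver {d : V} (hd : d ≠ L.root) (hs : ¬ L.spec d) (v w : V) :
    Good (L.P (L.par d), L.bA d) (L.P v, L.bC v w) := by
  refine good_left (L.P (L.par d)) (Or.inl rfl) (L.bA_ne1 d) fun z hz hz' => ?_
  obtain ⟨t, h0, h1, h2, h3⟩ := L.fan_of_mem hd hs hz
  have h4 := L.ver_of_mem hz'
  refine L.fan_at h2 h3 ?_
  rcases L.x_tri (L.par d) v with h | h | h
  · rcases h3 with h3 | h3 <;> linarith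
  · rw [h] at h3; rcases h3 with h3 | h3 <;> linarith
  · rcases h3 with h3 | h3 <;> linarith

theorem good_fan_sl {d : V} (hd : d ≠ L.root) (hs : ¬ L.spec d) {v w : V}
    (hk : L.k w = L.k v + 1) :
    Good (L.P (L.par d), L.bA d) (L.bC v w, L.P w) := by
  refine good_right (L.P w) (Or.inr rfl) (L.bC_ne2 hk) fun z hz hz' => ?_
  obtain ⟨t, h0, h1, h2, h3⟩ := L.fan_of_mem hd hs hz
  obtain ⟨u, g0, g1, g2, g3⟩ := L.sl_of_mem hk hz'
  have hy := L.y_lt (L.reg_r d hd hs)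
  have ex := L.x_succ hk
  rcases L.x_tri (L.par d) v with h | h | h
  · rcases h3 with h3 | h3 <;> linarith
  · exfalso
    have hn := L.fan_next d w hd hs (by rw [h]; exact hk)
    have hu : 0 ≤ t * (L.y d - L.y (L.par d)) := by nlinarith
    have hu' : t * (L.y d - L.y (L.par d)) ≤ L.y d - L.y (L.par d) := by nlinarith
    rw [h] at h2 h3 hy hn hu hu'
    have hvw : L.r w ≠ L.r v := fun e => by
      have := L.r_inj _ _ e; subst this; omega
    rcases lt_or_gt_of_ne hvw with h5 | h5
    · have := L.y_lt h5; linarith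
    · have := L.y_le (u := d) (v := w) (by by_contra h6; exact hn ⟨h5, by omega⟩)
      have : u ≤ 1/2 := by rcases h3 with h3 | h3 <;> linarith
      linarith
  · rcases L.x_tri (L.par d) w with h' | h' | h'
    · linarith
    · have hu : 2 * t ≤ t * (L.y d - L.y (L.par d)) := by nlinarith
      rw [← h']
      refine L.fan_at h2 h3 ?_
      rw [h'] at h3 h2 hu
      rcases h3 with h3 | h3 <;> linarith
    · rcases h3 with h3 | h3 <;> linarith

theorem good_fan_clo {d : V} (hd : d ≠ L.root) (hs : ¬ L.spec d) {v w : V}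
    (hv : L.k v + 1 = n) (hw : L.k w = 0) :
    Good (L.P (L.par d), L.bA d) (L.bC v w, L.P w) := by
  refine good_left (L.P (L.par d)) (Or.inl rfl) (L.bA_ne1 d) fun z hz hz' => ?_
  have h2 := L.clo_of_mem hv hw hz'
  have h3 := L.reg_range hd hs (Or.inl hz)
  have h4 := L.y_ge (L.par d)
  exact h3.2.2 (by linarith)

theorem good_hor_ver {d : V} (hs : ¬ L.spec d) (v w : V) :
    Good (L.bA d, L.P d) (L.P v, L.bC v w) :=
  good_of_hv (L.bA_hor hs) (L.bC_ver v w)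

theorem good_hor_sl {d : V} (hd : d ≠ L.root) (hs : ¬ L.spec d) {v w : V}
    (hk : L.k w = L.k v + 1) :
    Good (L.bA d, L.P d) (L.bC v w, L.P w) := by
  refine good_right (L.P w) (Or.inr rfl) (L.bC_ne2 hk) fun z hz hz' => ?_
  obtain ⟨h2, -⟩ := L.hor_of_mem hd hs hz
  obtain ⟨u, g0, g1, g2, g3⟩ := L.sl_of_mem hk hz'
  have ex := L.x_succ hk
  have : u = 1 := by
    rcases L.y_tri d w with h | h | h
    · linarith
    · rw [h] at h2; linarith
    · linarith
  exact L.P_eq (by linarith) (by linarith)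

/-- vacuous case -/
theorem good_of_empty {s t : (ℝ × ℝ) × (ℝ × ℝ)}
    (h : ∀ p, p ∈ segment ℝ s.1 s.2 → p ∈ segment ℝ t.1 t.2 → False) : Good s t := by
  constructor
  · rintro p ⟨hp, hp'⟩
    exact (h p hp hp').elim
  · rintro ⟨p, hp, hp'⟩
    exact (h p (openSegment_subset_segment _ _ _ hp) (openSegment_subset_segment _ _ _ hp')).elim

theorem good_hor_clo {d : V} (hd : d ≠ L.root) (hs : ¬ L.spec d) {v w : V}
    (hv : L.k v + 1 = n) (hw : L.k w = 0) :
    Good (L.bA d, L.P d) (L.bC v w, L.P w) := by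
  refine good_of_empty fun z hz hz' => ?_
  obtain ⟨h1, -⟩ := L.hor_of_mem hd hs hz
  have h2 := L.clo_of_mem hv hw hz'
  have := L.y_nonroot hd
  linarith

theorem good_sp1_ver {d : V} (hs : L.spec d) (v w : V) :
    Good (L.P (L.par d), L.bA d) (L.P v, L.bC v w) := by
  refine good_left (L.P (L.par d)) (Or.inl rfl) (L.bA_ne1 d) fun z hz hz' => ?_
  obtain ⟨t, h0, h1, h2, h3⟩ := L.sp1_of_mem hs hz
  have h4 := L.ver_of_mem hz'
  have : t = 0 := by
    rcases L.x_tri (L.par d) v with h | h | h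
    · linarith
    · rw [h] at h2; linarith
    · linarith
  exact L.P_eq (by linarith) (by linarith)

theorem good_sp2_ver {d : V} (hs : L.spec d) (v w : V) :
    Good (L.bA d, L.P d) (L.P v, L.bC v w) := by
  refine good_left (L.P d) (Or.inr rfl) (L.bA_ne2 hs) fun z hz hz' => ?_
  obtain ⟨t, h0, h1, h2, h3⟩ := L.sp2_of_mem hs hz
  have h4 := L.ver_of_mem hz'
  have e := L.x_succ (L.spec_k d hs)
  have e' := L.y_succ (L.spec_r d hs)
  have : t = 0 := by
    rcases L.x_tri d v with h | h | h
    · linarith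
    · rw [← h] at h4; linarith
    · linarith
  exact L.P_eq (by linarith) (by linarith)

theorem good_sp1_sl {d : V} (hs : L.spec d) {v w : V} (hk : L.k w = L.k v + 1) :
    Good (L.P (L.par d), L.bA d) (L.bC v w, L.P w) := by
  refine good_right (L.P w) (Or.inr rfl) (L.bC_ne2 hk) fun z hz hz' => ?_
  obtain ⟨t, h0, h1, h2, h3⟩ := L.sp1_of_mem hs hz
  obtain ⟨u, g0, g1, g2, g3⟩ := L.sl_of_mem hk hz'
  have ex := L.x_succ hk
  have e := L.x_succ (L.spec_k d hs)
  have e' := L.y_succ (L.spec_r d hs)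
  rcases L.x_tri (L.par d) v with h | h | h
  · linarith
  · have : w = d := L.k_inj _ _ (by rw [hk, L.spec_k d hs, h])
    subst this
    rw [h] at h2 h3 e'
    exfalso; linarith
  · rcases L.x_tri (L.par d) w with h' | h' | h'
    · linarith
    · rw [h'] at h2 h3
      exact L.P_eq (by linarith) (by linarith)
    · linarith

theorem good_sp2_sl {d : V} (hs : L.spec d) {v w : V} (hk : L.k w = L.k v + 1) :
    Good (L.bA d, L.P d) (L.bC v w, L.P w) := by
  refine good_right (L.P w) (Or.inr rfl) (L.bC_ne2 hk) fun z hz hz' => ?_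
  obtain ⟨t, h0, h1, h2, h3⟩ := L.sp2_of_mem hs hz
  obtain ⟨u, g0, g1, g2, g3⟩ := L.sl_of_mem hk hz'
  have ex := L.x_succ hk
  have e := L.x_succ (L.spec_k d hs)
  have e' := L.y_succ (L.spec_r d hs)
  rcases L.x_tri (L.par d) v with h | h | h
  · have : d = v := by
      rcases L.x_tri d v with h' | h' | h'
      · linarith
      · exact h'
      · linarith
    subst this
    exact absurd (show L.y d = L.y w + 1 by linarith) (L.y_even d w)
  · have : w = d := L.k_inj _ _ (by rw [hk, L.spec_k d hs, h])
    subst this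
    rw [h] at h2 h3 e'
    exact L.P_eq (by linarith) (by linarith)
  · linarith

theorem good_sp_clo {d : V} (hs : L.spec d) {v w : V} {s : (ℝ × ℝ) × (ℝ × ℝ)}
    (hv : L.k v + 1 = n) (hw : L.k w = 0)
    (h : s = (L.P (L.par d), L.bA d) ∨ s = (L.bA d, L.P d)) :
    Good s (L.bC v w, L.P w) := by
  refine good_of_empty fun z hz hz' => ?_
  have h2 := L.clo_of_mem hv hw hz'
  have h3 := L.y_nonroot (L.ne_root_of_spec hs)
  have e' := L.y_succ (L.spec_r d hs)
  have h4 : L.onA d z := by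
    rcases h with h | h
    · left; rw [h] at hz; exact hz
    · right; rw [h] at hz; exact hz
  have := L.spec_range hs h4
  linarith

theorem good_all {d : V} (hd : d ≠ L.root) {v w : V} (hc : L.CE v w)
    {s t : (ℝ × ℝ) × (ℝ × ℝ)}
    (hs : s = (L.P (L.par d), L.bA d) ∨ s = (L.bA d, L.P d))
    (ht : t = (L.P v, L.bC v w) ∨ t = (L.bC v w, L.P w)) : Good s t := by
  by_cases hsp : L.spec d
  · rcases ht with rfl | rfl
    · rcases hs with rfl | rfl
      · exact L.good_sp1_ver hsp v w
      · exact L.good_sp2_ver hsp v w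
    · rcases hc with hk | ⟨hk, hw⟩
      · rcases hs with rfl | rfl
        · exact L.good_sp1_sl hsp hk
        · exact L.good_sp2_sl hsp hk
      · exact L.good_sp_clo hsp hk hw hs
  · rcases ht with rfl | rfl
    · rcases hs with rfl | rfl
      · exact L.good_fan_ver hd hsp v w
      · exact L.good_hor_ver hsp v w
    · rcases hc with hk | ⟨hk, hw⟩
      · rcases hs with rfl | rfl
        · exact L.good_fan_sl hd hsp hk
        · exact L.good_hor_sl hd hsp hk
      · rcases hs with rfl | rfl
        · exact L.good_fan_clo hd hsp hk hw
        · exact L.good_hor_clo hd hsp hk hw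

theorem grid_P (v : V) : OnGridPt (2 * (n : ℤ) - 1) (2 * (n : ℤ)) (L.P v) := by
  have h1 := L.k_lt v
  have h2 := L.r_lt v
  refine ⟨2 * (L.k v : ℤ) + 1, 2 * (L.r v : ℤ) + 1, ?_, ?_, ?_, ?_, ?_⟩
  · unfold P x y; push_cast; rfl
  all_goals omega

theorem grid_bA {d : V} (hd : d ≠ L.root) :
    OnGridPt (2 * (n : ℤ) - 1) (2 * (n : ℤ)) (L.bA d) := by
  have h1 := L.k_lt d
  have h2 := L.r_lt d
  have h3 := L.k_lt (L.par d)
  unfold bA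
  split_ifs with h h'
  · have := L.spec_k d h
    refine ⟨2 * (L.k (L.par d) : ℤ) + 1 + 1, 2 * (L.r d : ℤ) + 1 + 1, ?_, ?_, ?_, ?_, ?_⟩
    · unfold x y; push_cast; rfl
    all_goals omega
  · refine ⟨2 * (L.k (L.par d) : ℤ) + 1 + 1, 2 * (L.r d : ℤ) + 1, ?_, ?_, ?_, ?_, ?_⟩
    · unfold x y; push_cast; rfl
    all_goals omega
  · have h4 := L.reg_r d hd h
    have h5 : L.k d ≠ L.k (L.par d) := fun e => by
      have := L.k_inj _ _ e; rw [← this] at h4; omega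
    refine ⟨2 * (L.k (L.par d) : ℤ) + 1 - 1, 2 * (L.r d : ℤ) + 1, ?_, ?_, ?_, ?_, ?_⟩
    · unfold x y; push_cast; rfl
    all_goals omega

theorem grid_bC (v w : V) :
    OnGridPt (2 * (n : ℤ) - 1) (2 * (n : ℤ)) (L.bC v w) := by
  have h1 := L.k_lt v
  have h2 := L.r_lt w
  unfold bC
  split_ifs with h
  · refine ⟨2 * (L.k v : ℤ) + 1, 2 * (L.r w : ℤ) + 1 + 1, ?_, ?_, ?_, ?_, ?_⟩
    · unfold x y; push_cast; rfl
    all_goals omega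
  · refine ⟨2 * (L.k v : ℤ) + 1, 2 * (L.r w : ℤ) + 1, ?_, ?_, ?_, ?_, ?_⟩
    · unfold x y; push_cast; rfl
    all_goals omega

/-- two-segment polyline -/
def pl (p b q : ℝ × ℝ) : Polyline := ⟨2, ![p, b, q]⟩

theorem pl_segs {p b q : ℝ × ℝ} {s : (ℝ × ℝ) × (ℝ × ℝ)} (h : s ∈ (pl p b q).segs) :
    s = (p, b) ∨ s = (b, q) := by
  obtain ⟨i, hi⟩ := h
  unfold pl at i hi
  simp only at i hi
  fin_cases i
  · left; exact hi
  · right; exact hi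

theorem pl_curve {p b q z : ℝ × ℝ} (h : z ∈ (pl p b q).curve) :
    z ∈ segment ℝ p b ∨ z ∈ segment ℝ b q := by
  obtain ⟨i, hi⟩ := Set.mem_iUnion.mp h
  unfold pl at i hi
  simp only at i hi
  fin_cases i
  · left; exact hi
  · right; exact hi

theorem seg_sub_curve {Q : Polyline} {s : (ℝ × ℝ) × (ℝ × ℝ)} (h : s ∈ Q.segs) :
    segment ℝ s.1 s.2 ⊆ Q.curve := by
  obtain ⟨i, rfl⟩ := h
  exact Set.subset_iUnion (fun i : Fin Q.n => segment ℝ (Q.pts i.castSucc) (Q.pts i.succ)) i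

theorem main (A C : SimpleGraph V)
    (hA : ∀ a b, A.Adj a b → ∃ d, d ≠ L.root ∧ s(a, b) = s(L.par d, d))
    (hC : ∀ a b, C.Adj a b → ∃ v w, L.CE v w ∧ s(a, b) = s(v, w)) :
    ∃ D : SimDrawing ![A, C], D.IsRacSim ∧
      D.OnGrid (2 * (n : ℤ) - 1) (2 * (n : ℤ)) ∧
      ∀ i : Fin 2, D.BendsAtMost i 1 := by
  classical
  have hA' : ∀ e : Sym2 V, ∃ Q : Polyline, e ∈ A.edgeSet → ∃ d, d ≠ L.root ∧
      e = s(L.par d, d) ∧ Q = pl (L.P (L.par d)) (L.bA d) (L.P d) := by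
    intro e
    by_cases he : e ∈ A.edgeSet
    · induction e using Sym2.ind with
      | _ a b =>
        obtain ⟨d, h1, h2⟩ := hA a b he
        exact ⟨_, fun _ => ⟨d, h1, h2, rfl⟩⟩
    · exact ⟨⟨0, fun _ => 0⟩, fun h => absurd h he⟩
  have hC' : ∀ e : Sym2 V, ∃ Q : Polyline, e ∈ C.edgeSet → ∃ v w, L.CE v w ∧
      e = s(v, w) ∧ Q = pl (L.P v) (L.bC v w) (L.P w) := by
    intro e
    by_cases he : e ∈ C.edgeSet
    · induction e using Sym2.ind with
      | _ a b =>
        obtain ⟨v, w, h1, h2⟩ := hC a b he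
        exact ⟨_, fun _ => ⟨v, w, h1, h2, rfl⟩⟩
    · exact ⟨⟨0, fun _ => 0⟩, fun h => absurd h he⟩
  choose QA hQA using hA'
  choose QC hQC using hC'
  let D : SimDrawing ![A, C] :=
    { pos := L.P
      pos_injective := L.P_inj
      poly := ![QA, QC]
      joins := by
        have key : ∀ (p q u v : V) (b : ℝ × ℝ), s(p, q) = s(u, v) →
            ((pl (L.P u) b (L.P v)).first = L.P p ∧ (pl (L.P u) b (L.P v)).last = L.P q) ∨
            ((pl (L.P u) b (L.P v)).first = L.P q ∧ (pl (L.P u) b (L.P v)).last = L.P p) := by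
          intro p q u v b h
          rcases Sym2.eq_iff.mp h with ⟨rfl, rfl⟩ | ⟨rfl, rfl⟩
          · left; exact ⟨rfl, rfl⟩
          · right; exact ⟨rfl, rfl⟩
        intro i a b hab
        fin_cases i
        · obtain ⟨d, h1, h2, h3⟩ := hQA s(a, b) hab
          change ((QA s(a, b)).first = _ ∧ (QA s(a, b)).last = _) ∨
            ((QA s(a, b)).first = _ ∧ (QA s(a, b)).last = _)
          rw [h3]
          exact key _ _ _ _ _ h2
        · obtain ⟨v, w, h1, h2, h3⟩ := hQC s(a, b) hab
          change ((QC s(a, b)).first = _ ∧ (QC s(a, b)).last = _) ∨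
            ((QC s(a, b)).first = _ ∧ (QC s(a, b)).last = _)
          rw [h3]
          exact key _ _ _ _ _ h2 }
  have hplan : D.PlanarEach := by
    intro i e he e' he' hne z hz
    fin_cases i
    · obtain ⟨d, h1, h2, h3⟩ := hQA e he
      obtain ⟨d', h1', h2', h3'⟩ := hQA e' he'
      have hz1 : z ∈ (QA e).curve := hz.1
      have hz2 : z ∈ (QA e').curve := hz.2
      rw [h3] at hz1
      rw [h3'] at hz2
      obtain ⟨v, hv, hv', hz'⟩ := L.planarA h1 h1' (by rintro rfl; exact hne (h2.trans h2'.symm))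
        (pl_curve hz1) (pl_curve hz2)
      exact ⟨v, by rw [h2]; exact Sym2.mem_iff.mpr hv, by rw [h2']; exact Sym2.mem_iff.mpr hv', hz'⟩
    · obtain ⟨v, w, h1, h2, h3⟩ := hQC e he
      obtain ⟨v', w', h1', h2', h3'⟩ := hQC e' he'
      have hz1 : z ∈ (QC e).curve := hz.1
      have hz2 : z ∈ (QC e').curve := hz.2
      rw [h3] at hz1
      rw [h3'] at hz2
      have hvv : v ≠ v' := by
        rintro rfl
        have : w = w' := by
          apply L.k_inj
          have a1 := L.k_lt w
          have a2 := L.k_lt w'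
          unfold CE at h1 h1'
          omega
        subst this
        exact hne (h2.trans h2'.symm)
      obtain ⟨u, hv, hv', hz'⟩ := L.planarC h1 h1' hvv (pl_curve hz1) (pl_curve hz2)
      exact ⟨u, by rw [h2]; exact Sym2.mem_iff.mpr hv, by rw [h2']; exact Sym2.mem_iff.mpr hv', hz'⟩
  have hgood : ∀ e ∈ A.edgeSet, ∀ e' ∈ C.edgeSet, ∀ s ∈ (QA e).segs, ∀ t ∈ (QC e').segs,
      Good s t := by
    intro e he e' he' s hs t ht
    obtain ⟨d, h1, h2, h3⟩ := hQA e he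
    obtain ⟨v', w', h1', h2', h3'⟩ := hQC e' he'
    rw [h3] at hs
    rw [h3'] at ht
    exact L.good_all h1 h1' (pl_segs hs) (pl_segs ht)
  have hsame : ∀ i, ∀ e ∈ ((![A, C] : Fin 2 → SimpleGraph V) i).edgeSet,
      ∀ e' ∈ ((![A, C] : Fin 2 → SimpleGraph V) i).edgeSet, e ≠ e' →
      ∀ s ∈ (D.poly i e).segs, ∀ t ∈ (D.poly i e').segs,
        (segment ℝ s.1 s.2 ∩ segment ℝ t.1 t.2).Subsingleton := by
    intro i e he e' he' hne s hs t ht p hp q hq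
    obtain ⟨u, hu, hu', rfl⟩ :=
      hplan i e he e' he' hne ⟨seg_sub_curve hs hp.1, seg_sub_curve ht hp.2⟩
    obtain ⟨v, hv, hv', rfl⟩ :=
      hplan i e he e' he' hne ⟨seg_sub_curve hs hq.1, seg_sub_curve ht hq.2⟩
    by_cases huv : u = v
    · rw [huv]
    · exact absurd (((Sym2.mem_and_mem_iff huv).mp ⟨hu, hv⟩).trans
        ((Sym2.mem_and_mem_iff huv).mp ⟨hu', hv'⟩).symm) hne
  refine ⟨D, ⟨hplan, ?_, ?_⟩, ⟨L.grid_P, ?_⟩, ?_⟩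
  · intro i e he j e' he' hij s hs t ht
    by_cases h : i = j
    · subst h
      exact hsame i e he e' he' (by tauto) s hs t ht
    · fin_cases i <;> fin_cases j
      · exact absurd rfl h
      · exact (hgood e he e' he' s hs t ht).1
      · rw [Set.inter_comm]; exact (hgood e' he' e he t ht s hs).1
      · exact absurd rfl h
  · intro i j h e he e' he' s hs t ht hx
    fin_cases i <;> fin_cases j
    · exact absurd rfl h
    · exact (hgood e he e' he' s hs t ht).2 hx
    · have := (hgood e' he' e he t ht s hs).2 (by unfold SegCross at hx ⊢; rwa [Set.inter_comm])
      unfold SegPerp at this ⊢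
      linarith
    · exact absurd rfl h
  · have key : ∀ (a b : ℤ) (p q r : ℝ × ℝ) (Q : Polyline), Q = pl p q r → OnGridPt a b p →
        OnGridPt a b q → OnGridPt a b r → ∀ k, OnGridPt a b (Q.pts k) := by
      rintro a b p q r Q rfl h1 h2 h3 k
      unfold pl at k ⊢
      simp only at k ⊢
      fin_cases k
      · exact h1
      · exact h2
      · exact h3
    intro i e he
    fin_cases i
    · obtain ⟨d, h1, h2, h3⟩ := hQA e he
      exact key _ _ _ _ _ _ h3 (L.grid_P _) (L.grid_bA h1) (L.grid_P _)
    · obtain ⟨v, w, h1, h2, h3⟩ := hQC e he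
      exact key _ _ _ _ _ _ h3 (L.grid_P _) (L.grid_bC _ _) (L.grid_P _)
  · intro i e he
    fin_cases i
    · obtain ⟨d, h1, h2, h3⟩ := hQA e he
      change (QA e).n ≤ 2
      rw [h3]; rfl
    · obtain ⟨v, w, h1, h2, h3⟩ := hQC e he
      change (QC e).n ≤ 2
      rw [h3]; rfl

end Lay

theorem exists_cycle_index {V : Type} [Fintype V] (C : SimpleGraph V) (hC : IsSpanningCycle C)
    (root : V) : ∃ k : V → ℕ, (∀ v, k v < Fintype.card V) ∧ (∀ u v, k u = k v → u = v) ∧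
      k root = 0 ∧ ∀ a b, C.Adj a b → ∃ v w, (k w = k v + 1 ∨
        (k v + 1 = Fintype.card V ∧ k w = 0)) ∧ s(a, b) = s(v, w) := by
  classical
  obtain ⟨hconn, hdeg⟩ := hC
  have hcyc : C.IsCycles := fun v _ => hdeg v
  have hne : (C.neighborSet root).Nonempty := by
    apply Set.nonempty_of_ncard_ne_zero
    have := hdeg root
    unfold vdeg at this
    omega
  obtain ⟨p, hp, hverts⟩ := hcyc.exists_cycle_toSubgraph_verts_eq_connectedComponentSupp
    (c := C.connectedComponentMk root) (v := root) (by simp) hne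
  have hall : ∀ v, v ∈ p.toSubgraph.verts := by
    intro v
    rw [hverts]
    exact SimpleGraph.ConnectedComponent.eq.mpr (hconn v root)
  have hlen : 3 ≤ p.length := hp.three_le_length
  have hex : ∀ v, ∃ i, i < p.length ∧ p.getVert i = v := by
    intro v
    have := hall v
    rw [SimpleGraph.Walk.mem_verts_toSubgraph, SimpleGraph.Walk.mem_support_iff_exists_getVert] at this
    obtain ⟨i, hi, hi'⟩ := this
    rcases Nat.lt_or_ge i p.length with h | h
    · exact ⟨i, h, hi⟩
    · refine ⟨0, by omega, ?_⟩
      have : i = p.length := by omega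
      rw [this, SimpleGraph.Walk.getVert_length] at hi
      rw [SimpleGraph.Walk.getVert_zero, hi]
  have hinj : ∀ i j, i < p.length → j < p.length → p.getVert i = p.getVert j → i = j := by
    intro i j hi hj h
    exact hp.getVert_injOn' (show i ≤ p.length - 1 by omega) (show j ≤ p.length - 1 by omega) h
  have hcard : p.length = Fintype.card V := by
    have : Function.Bijective (fun i : Fin p.length => p.getVert i) := by
      constructor
      · intro i j h
        exact Fin.ext (hinj i j i.2 j.2 h)
      · intro v
        obtain ⟨i, hi, h⟩ := hex v
        exact ⟨⟨i, hi⟩, h⟩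
    simpa using Fintype.card_of_bijective this
  choose k hk1 hk2 using hex
  have hk : ∀ i, i < p.length → k (p.getVert i) = i := fun i hi =>
    hinj _ _ (hk1 _) hi (hk2 _)
  refine ⟨k, fun v => hcard ▸ hk1 v, fun u v h => by rw [← hk2 u, ← hk2 v, h], ?_, ?_⟩
  · have := hk 0 (by omega)
    rwa [SimpleGraph.Walk.getVert_zero] at this
  · intro a b hab
    have h1 : p.toSubgraph.Adj a b := by
      rw [hp.adj_toSubgraph_iff_of_isCycles hcyc (hall a)]
      exact hab
    rw [SimpleGraph.Walk.toSubgraph_adj_iff] at h1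
    obtain ⟨i, hi, hil⟩ := h1
    refine ⟨p.getVert i, p.getVert (i + 1), ?_, hi.symm⟩
    rw [hk i hil, ← hcard]
    rcases Nat.lt_or_ge (i + 1) p.length with h | h
    · left; exact hk _ h
    · right
      have : i + 1 = p.length := by omega
      refine ⟨this, ?_⟩
      rw [this, SimpleGraph.Walk.getVert_length]
      have := hk 0 (by omega)
      rwa [SimpleGraph.Walk.getVert_zero] at this

theorem exists_rank {V : Type} [Fintype V] (K : V → ℕ) (hK : ∀ u v, K u = K v → u = v) :
    ∃ r : V → ℕ, (∀ v, r v < Fintype.card V) ∧ (∀ u v, r u < r v ↔ K u < K v) ∧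
      (∀ v, (∀ u, K v ≤ K u) → r v = 0) ∧
      (∀ u v, K u < K v → (∀ w, K w < K v → K w ≤ K u) → r v = r u + 1) := by
  classical
  let F : V → Finset V := fun v => Finset.univ.filter fun u => K u < K v
  have hmono : ∀ u v, K u < K v → (F u).card < (F v).card := by
    intro u v h
    apply Finset.card_lt_card
    rw [Finset.ssubset_iff_of_subset]
    · exact ⟨u, by simp [F, h], by simp [F]⟩
    · intro w; simp only [F, Finset.mem_filter]; rintro ⟨h1, h2⟩; exact ⟨h1, by omega⟩
  refine ⟨fun v => (F v).card, ?_, ?_, ?_, ?_⟩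
  · intro v
    apply Finset.card_lt_univ_of_notMem (x := v)
    simp [F]
  · intro u v
    refine ⟨fun h => ?_, hmono u v⟩
    by_contra h'
    rcases Nat.lt_or_ge (K v) (K u) with h1 | h1
    · have := hmono _ _ h1
      simp only at h
      omega
    · have := hK u v (by omega)
      subst this
      simp at h
  · intro v h
    simp only [F, Finset.card_eq_zero, Finset.filter_eq_empty_iff]
    intro u _
    have := h u
    omega
  · intro u v h h'
    have : F v = insert u (F u) := by
      ext w
      simp only [F, Finset.mem_filter, Finset.mem_univ, true_and, Finset.mem_insert]
      constructor
      · intro hw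
        rcases Nat.lt_or_ge (K w) (K u) with h1 | h1
        · exact Or.inr h1
        · exact Or.inl (hK _ _ (by have := h' w hw; omega))
      · rintro (rfl | h1)
        · exact h
        · omega
    simp only
    rw [this, Finset.card_insert_of_notMem (by simp [F])]

theorem exists_parent {V : Type} {A : SimpleGraph V} (hA : A.Connected) (root d : V)
    (hd : d ≠ root) : ∃ p, A.Adj p d ∧ A.dist root d = A.dist root p + 1 := by
  obtain ⟨p, hp⟩ := hA.exists_walk_length_eq_dist d root
  cases p with
  | nil => exact absurd rfl hd
  | @cons _ x _ h q =>
    refine ⟨x, h.symm, ?_⟩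
    rw [SimpleGraph.Walk.length_cons] at hp
    have h1 := SimpleGraph.dist_le q
    have h2 := hA.dist_triangle (u := d) (v := x) (w := root)
    rw [SimpleGraph.dist_eq_one_iff_adj.mpr h] at h2
    rw [SimpleGraph.dist_comm (u := root), SimpleGraph.dist_comm (u := root)]
    omega

theorem exists_end {V : Type} [Fintype V] (A : SimpleGraph V) (hA : IsCaterpillar A)
    (hn : 3 ≤ Fintype.card V) : ∃ root e : V, A.Adj root e ∧ vdeg A root = 1 ∧ vdeg A e ≠ 1 ∧
      (∀ p u v, vdeg A p ≠ 1 → vdeg A u ≠ 1 → vdeg A v ≠ 1 → A.Adj p u → A.Adj p v → u ≠ v →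
        p ≠ e ∧ ∀ w, vdeg A w ≠ 1 → A.Adj p w → w = u ∨ w = v) := by
  classical
  obtain ⟨htree, hpath⟩ := hA
  rcases hpath with hemp | ⟨-, h2, ⟨e, he⟩, h1⟩
  · exfalso
    have hall : ∀ v, A.degree v = 1 := by
      intro v
      by_contra h
      refine hemp.false ⟨v, ?_⟩
      change vdeg A v ≠ 1
      unfold vdeg
      rw [Set.ncard_eq_toFinset_card']
      exact h
    have h3 := A.sum_degrees_eq_twice_card_edges
    have h4 := htree.card_edgeFinset
    simp only [hall, Finset.sum_const, Finset.card_univ, smul_eq_mul, mul_one] at h3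
    omega
  · have he : vdeg A e ≠ 1 := he
    have hnt : ∃ x, x ≠ e := by
      by_contra h
      push Not at h
      have : Fintype.card V ≤ 1 := Fintype.card_le_one_iff.mpr fun a b => by rw [h a, h b]
      omega
    obtain ⟨x, hx⟩ := hnt
    obtain ⟨y, hy, -⟩ := exists_parent htree.connected x e hx.symm
    have hdeg : 1 < (A.neighborSet e).ncard := by
      have : (A.neighborSet e).ncard ≠ 0 := by
        apply Set.ncard_ne_zero_of_mem (a := y)
        exact hy.symm
      have h' : (A.neighborSet e).ncard ≠ 1 := he
      omega
    have hone : ∀ u v, vdeg A u ≠ 1 → vdeg A v ≠ 1 → A.Adj e u → A.Adj e v → u = v := by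
      intro u v hu hv hau hav
      by_contra hne
      have : 1 < vdeg (A.induce {v : V | vdeg A v ≠ 1}) ⟨e, he⟩ := by
        unfold vdeg
        rw [Set.one_lt_ncard]
        exact ⟨⟨u, hu⟩, hau, ⟨v, hv⟩, hav, fun h => hne (congrArg Subtype.val h)⟩
      omega
    rw [Set.one_lt_ncard] at hdeg
    obtain ⟨a, ha, b, hb, hab⟩ := hdeg
    have hroot : ∃ root, A.Adj root e ∧ vdeg A root = 1 := by
      by_contra h
      push Not at h
      exact hab (hone a b (h a (SimpleGraph.Adj.symm ha)) (h b (SimpleGraph.Adj.symm hb)) ha hb)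
    obtain ⟨root, hr1, hr2⟩ := hroot
    refine ⟨root, e, hr1, hr2, he, ?_⟩
    intro p u v hp hu hv hpu hpv huv
    refine ⟨?_, ?_⟩
    · rintro rfl
      exact huv (hone u v hu hv hpu hpv)
    · intro w hw hpw
      by_contra h
      push Not at h
      have : 2 < vdeg (A.induce {v : V | vdeg A v ≠ 1}) ⟨p, hp⟩ := by
        unfold vdeg
        rw [Set.two_lt_ncard_iff]
        refine ⟨⟨u, hu⟩, ⟨v, hv⟩, ⟨w, hw⟩, hpu, hpv, hpw, ?_, ?_, ?_⟩
        · exact fun h => huv (congrArg Subtype.val h)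
        · exact fun h' => h.1 (congrArg Subtype.val h').symm
        · exact fun h' => h.2 (congrArg Subtype.val h').symm
      have := h2 ⟨p, hp⟩
      omega

theorem caterpillar_structure {V : Type} [Fintype V] (A : SimpleGraph V) (hA : IsCaterpillar A)
    (hn : 3 ≤ Fintype.card V) :
    ∃ (root : V) (par : V → V) (S : V → Prop) (lev : V → ℕ),
      S root ∧ lev root = 0 ∧ (∀ d, d ≠ root → S (par d)) ∧
      (∀ d, d ≠ root → S d → lev d = lev (par d) + 1) ∧
      (∀ d, ¬ S d → lev d = lev (par d) ∧ par d ≠ root) ∧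
      (∀ u v, S u → S v → lev u = lev v → u = v) ∧
      (∀ a b, A.Adj a b → ∃ d, d ≠ root ∧ s(a, b) = s(par d, d)) := by
  classical
  obtain ⟨root, e, hre, hroot, he, hH⟩ := exists_end A hA hn
  have htree := hA.1
  have hpar : ∀ d, ∃ p, d ≠ root → A.Adj p d ∧ A.dist root d = A.dist root p + 1 := by
    intro d
    by_cases hd : d = root
    · exact ⟨d, fun h => absurd hd h⟩
    · obtain ⟨p, hp⟩ := exists_parent htree.connected root d hd
      exact ⟨p, fun _ => hp⟩
  choose par hpar using hpar
  have hleaf : ∀ d, A.Adj root d → d = e := by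
    intro d hd
    obtain ⟨z, hz⟩ := Set.ncard_eq_one.mp hroot
    have h1 : d ∈ A.neighborSet root := hd
    have h2 : e ∈ A.neighborSet root := hre
    rw [hz] at h1 h2
    exact h1.trans h2.symm
  let S : V → Prop := fun v => v = root ∨ vdeg A v ≠ 1
  have hSpar : ∀ d, d ≠ root → S (par d) := by
    intro d hd
    by_cases h : par d = root
    · exact Or.inl h
    · right
      obtain ⟨h1, h2⟩ := hpar d hd
      obtain ⟨h3, h4⟩ := hpar _ h
      have : 1 < vdeg A (par d) := by
        unfold vdeg
        rw [Set.one_lt_ncard]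
        refine ⟨d, h1, par (par d), h3.symm, fun h => ?_⟩
        rw [← h] at h4; omega
      omega
  have hinj : ∀ j u v, S u → S v → A.dist root u = j → A.dist root v = j → u = v := by
    intro j
    induction j with
    | zero =>
      intro u v _ _ h1 h2
      rw [← htree.connected.dist_eq_zero_iff.mp h1, ← htree.connected.dist_eq_zero_iff.mp h2]
    | succ j ih =>
      intro u v hu hv h1 h2
      by_contra hne
      have hur : u ≠ root := by rintro rfl; simp at h1
      have hvr : v ≠ root := by rintro rfl; simp at h2
      have hu' : vdeg A u ≠ 1 := hu.resolve_left hur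
      have hv' : vdeg A v ≠ 1 := hv.resolve_left hvr
      obtain ⟨a1, a2⟩ := hpar u hur
      obtain ⟨b1, b2⟩ := hpar v hvr
      have hp : par u = par v := ih _ _ (hSpar u hur) (hSpar v hvr) (by omega) (by omega)
      rw [← hp] at b1
      by_cases hpr : par u = root
      · rw [hpr] at a1 b1
        exact hne ((hleaf u a1).trans (hleaf v b1).symm)
      · have hp' : vdeg A (par u) ≠ 1 := (hSpar u hur).resolve_left hpr
        obtain ⟨c1, c2⟩ := hH _ u v hp' hu' hv' a1 b1 hne
        obtain ⟨d1, d2⟩ := hpar _ hpr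
        have hppr : par (par u) ≠ root := by
          intro h
          rw [h] at d1
          exact c1 (hleaf _ d1)
        rcases c2 (par (par u)) ((hSpar _ hpr).resolve_left hppr) d1.symm with h | h
        · rw [h] at d2; omega
        · rw [h] at d2; omega
  have hnS : ∀ d, ¬ S d → d ≠ root ∧ par d ≠ root := by
    intro d hd
    have hdr : d ≠ root := fun h => hd (Or.inl h)
    refine ⟨hdr, fun h => ?_⟩
    have := (hpar d hdr).1
    rw [h] at this
    have := hleaf d this
    rw [this] at hd
    exact hd (Or.inr he)
  refine ⟨root, par, S, fun v => if S v then A.dist root v else A.dist root v - 1,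
    Or.inl rfl, ?_, hSpar, ?_, ?_, ?_, ?_⟩
  · simp
  · intro d hd hS
    simp only
    rw [if_pos hS, if_pos (hSpar d hd)]
    exact (hpar d hd).2
  · intro d hd
    obtain ⟨h1, h2⟩ := hnS d hd
    refine ⟨?_, h2⟩
    simp only
    rw [if_neg hd, if_pos (hSpar d h1), (hpar d h1).2]
    simp
  · intro u v hu hv h
    beta_reduce at h
    rw [if_pos hu, if_pos hv] at h
    exact hinj _ u v hu hv h rfl
  · let f : {d : V // d ≠ root} → A.edgeSet := fun d => ⟨s(par d.1, d.1), (hpar d.1 d.2).1⟩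
    have hf : Function.Injective f := by
      rintro ⟨c, hc⟩ ⟨d, hd⟩ h
      have h' : s(par c, c) = s(par d, d) := congrArg Subtype.val h
      rcases Sym2.eq_iff.mp h' with ⟨_, h2⟩ | ⟨h1, h2⟩
      · exact Subtype.ext h2
      · exfalso
        have e1 := (hpar c hc).2
        have e2 := (hpar d hd).2
        rw [h1] at e1
        rw [← h2] at e2
        omega
    have hc : Fintype.card {d : V // d ≠ root} = Fintype.card A.edgeSet := by
      have h1 := htree.card_edgeFinset
      rw [SimpleGraph.edgeFinset_card] at h1
      have h2 : Fintype.card {d : V // d ≠ root} = Fintype.card V - 1 := by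
        simp [Fintype.card_subtype_compl]
      omega
    have hb := (Fintype.bijective_iff_injective_and_card f).mpr ⟨hf, hc⟩
    intro a b hab
    obtain ⟨d, hd⟩ := hb.2 ⟨s(a, b), hab⟩
    exact ⟨d.1, d.2, (congrArg Subtype.val hd).symm⟩

theorem exists_layout {V : Type} [Fintype V] (A C : SimpleGraph V)
    (hn : 3 ≤ Fintype.card V) (hA : IsCaterpillar A) (hC : IsSpanningCycle C) :
    ∃ L : Lay V (Fintype.card V),
      (∀ a b, A.Adj a b → ∃ d, d ≠ L.root ∧ s(a, b) = s(L.par d, d)) ∧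
      (∀ a b, C.Adj a b → ∃ v w, L.CE v w ∧ s(a, b) = s(v, w)) := by
  classical
  obtain ⟨root, par, S, lev, hSr, hlr, hSp, hlS, hlN, hlinj, hadj⟩ :=
    caterpillar_structure A hA hn
  obtain ⟨k, hk1, hk2, hk3, hk4⟩ := exists_cycle_index C hC root
  have hNr : ∀ d, ¬ S d → d ≠ root := by rintro d hd rfl; exact hd hSr
  have hlev : ∀ d, ¬ S d → 1 ≤ lev d := by
    intro d hd
    obtain ⟨h1, h2⟩ := hlN d hd
    by_contra h
    exact h2 (hlinj _ _ (hSp d (hNr d hd)) hSr (by omega))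
  let key : V → ℕ := fun v => if S v then 3 * lev v else
    if k v = k (par v) + 1 then 3 * lev v - 1 else 3 * lev v + 1
  have key1 : ∀ v, S v → key v = 3 * lev v := fun v h => by simp [key, h]
  have key2 : ∀ v, ¬ S v → k v = k (par v) + 1 → key v + 1 = 3 * lev v := fun v h h' => by
    have := hlev v h
    simp only [key, if_neg h, if_pos h']; omega
  have key3 : ∀ v, ¬ S v → k v ≠ k (par v) + 1 → key v = 3 * lev v + 1 := fun v h h' => by
    simp only [key, if_neg h, if_neg h']
  obtain ⟨r, hr1, hr2, hr3, hr4⟩ := exists_rank (fun v => Fintype.card V * key v + k v) (by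
    intro u v h
    apply hk2
    have h1 := hk1 u
    have h2 := hk1 v
    have e1 : (Fintype.card V * key u + k u) % Fintype.card V = k u := by
      rw [Nat.mul_add_mod, Nat.mod_eq_of_lt h1]
    have e2 : (Fintype.card V * key v + k v) % Fintype.card V = k v := by
      rw [Nat.mul_add_mod, Nat.mod_eq_of_lt h2]
    rw [← e1, ← e2, h])
  have hlt : ∀ u v, key u < key v →
      Fintype.card V * key u + k u < Fintype.card V * key v + k v := by
    intro u v h
    have h1 := hk1 u
    have : Fintype.card V * (key u + 1) ≤ Fintype.card V * key v := Nat.mul_le_mul_left _ h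
    rw [Nat.mul_add] at this
    omega
  have hrlt : ∀ u v, key u < key v → r u < r v := fun u v h => (hr2 u v).mpr (hlt u v h)
  have hrle : ∀ u v, r u < r v → key u ≤ key v := by
    intro u v h
    by_contra h'
    have := hrlt v u (by omega)
    omega
  have hrinj : ∀ u v, r u = r v → u = v := by
    intro u v h
    have h1 := hr2 u v
    have h2 := hr2 v u
    have h3 : Fintype.card V * key u + k u = Fintype.card V * key v + k v := by omega
    apply hk2
    have e1 : (Fintype.card V * key u + k u) % Fintype.card V = k u := by
      rw [Nat.mul_add_mod, Nat.mod_eq_of_lt (hk1 u)]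
    have e2 : (Fintype.card V * key v + k v) % Fintype.card V = k v := by
      rw [Nat.mul_add_mod, Nat.mod_eq_of_lt (hk1 v)]
    rw [← e1, ← e2, h3]
  -- classification of keys
  have kcase : ∀ v, (S v ∧ key v = 3 * lev v) ∨
      (¬ S v ∧ k v = k (par v) + 1 ∧ key v + 1 = 3 * lev v) ∨
      (¬ S v ∧ k v ≠ k (par v) + 1 ∧ key v = 3 * lev v + 1) := by
    intro v
    by_cases h : S v
    · exact Or.inl ⟨h, key1 v h⟩
    · by_cases h' : k v = k (par v) + 1
      · exact Or.inr (Or.inl ⟨h, h', key2 v h h'⟩)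
      · exact Or.inr (Or.inr ⟨h, h', key3 v h h'⟩)
  have kreg : ∀ d, d ≠ root → ¬ (¬ S d ∧ k d = k (par d) + 1) →
      (S d ∧ key d = key (par d) + 3 ∧ lev d = lev (par d) + 1) ∨
      (¬ S d ∧ key d = key (par d) + 1) := by
    intro d hd hs
    have hp := key1 _ (hSp d hd)
    rcases kcase d with ⟨h1, h2⟩ | ⟨h1, h2, h3⟩ | ⟨h1, h2, h3⟩
    · left
      have := hlS d hd h1
      exact ⟨h1, by omega, this⟩
    · exact absurd ⟨h1, h2⟩ hs
    · right
      have := (hlN d h1).1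
      exact ⟨h1, by omega⟩
  let L : Lay V (Fintype.card V) :=
    { k := k, r := r, par := par, root := root
      spec := fun c => ¬ S c ∧ k c = k (par c) + 1
      k_lt := hk1
      r_lt := hr1
      k_inj := hk2
      r_inj := hrinj
      k_root := hk3
      r_root := by
        apply hr3
        intro u
        have h0 := key1 root hSr
        rw [h0, hlr, hk3]
        omega
      spec_k := fun c h => h.2
      spec_r := by
        rintro c ⟨h1, h2⟩
        have e1 := key2 c h1 h2
        have e2 := key1 _ (hSp c (hNr c h1))
        have e3 := (hlN c h1).1
        apply hr4
        · exact hlt _ _ (by omega)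
        · intro w hw
          have hw1 := hrle w (par c) ((hr2 _ _).mpr hw)
          have hwne : w ≠ par c := by
            rintro rfl
            exact absurd hw (lt_irrefl _)
          rcases Nat.lt_or_ge (key w) (key c) with h | h
          · exact (hlt _ _ h).le
          · suffices w = c by rw [this]
            rcases kcase w with ⟨g1, g2⟩ | ⟨g1, g2, g3⟩ | ⟨g1, g2, g3⟩
            · exact absurd (hlinj _ _ g1 (hSp c (hNr c h1)) (by omega)) hwne
            · have e4 := (hlN w g1).1
              have : par w = par c := hlinj _ _ (hSp w (hNr w g1)) (hSp c (hNr c h1)) (by omega)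
              exact hk2 _ _ (by rw [g2, h2, this])
            · omega
      spec_np := by
        rintro c ⟨h1, -⟩ d hd rfl
        exact h1 (hSp d hd)
      spec_root := fun h => h.1 hSr
      reg_r := by
        intro d hd hs
        apply hrlt
        rcases kreg d hd hs with h | h <;> omega
      fan_spine := by
        rintro d d' hd hs hd' ⟨h1, h2⟩
        have g1 := hrle _ _ h1
        have g2 := hrle _ _ h2
        have e1 := key1 _ (hSp d hd)
        have e2 := key1 _ (hSp d' hd')
        rcases kreg d hd hs with ⟨a1, a2, a3⟩ | ⟨a1, a2⟩
        · have : lev (par d') = lev (par d) ∨ lev (par d') = lev d := by omega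
          rcases this with h | h
          · rw [hlinj _ _ (hSp d' hd') (hSp d hd) h] at h1; omega
          · rw [hlinj _ _ (hSp d' hd') a1 h] at h2; omega
        · have h : lev (par d') = lev (par d) := by omega
          rw [hlinj _ _ (hSp d' hd') (hSp d hd) h] at h1; omega
      fan_next := by
        rintro d w hd hs hkw ⟨h1, h2⟩
        have g1 := hrle _ _ h1
        have g2 := hrle _ _ h2
        have e1 := key1 _ (hSp d hd)
        rcases kcase w with ⟨b1, b2⟩ | ⟨b1, b2, b3⟩ | ⟨b1, b2, b3⟩
        · rcases kreg d hd hs with ⟨a1, a2, a3⟩ | ⟨a1, a2⟩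
          · have : lev w = lev (par d) ∨ lev w = lev d := by omega
            rcases this with h | h
            · rw [hlinj _ _ b1 (hSp d hd) h] at h1; omega
            · rw [hlinj _ _ b1 a1 h] at h2; omega
          · have h : lev w = lev (par d) := by omega
            rw [hlinj _ _ b1 (hSp d hd) h] at h1; omega
        · have e3 := (hlN w b1).1
          have h : par w = par d := hk2 _ _ (by omega)
          rw [h] at e3; omega
        · have e3 := (hlN w b1).1
          have h : par w = par d :=
            hlinj _ _ (hSp w (hNr w b1)) (hSp d hd) (by
              rcases kreg d hd hs with ⟨a1, a2, a3⟩ | ⟨a1, a2⟩ <;> omega)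
          rw [h] at b2; exact b2 hkw }
  exact ⟨L, hadj, hk4⟩

/-- A caterpillar and a spanning cycle on a common set of `n ≥ 3` vertices admit a
RacSim drawing on an integer grid of size `(2n - 1) × 2n` with at most one bend per
edge. -/
theorem racsim_caterpillar_cycle {V : Type} [Fintype V] (n : ℕ)
    (hcard : Fintype.card V = n) (hn : 3 ≤ n) (A C : SimpleGraph V)
    (hA : IsCaterpillar A) (hC : IsSpanningCycle C) :
    ∃ D : SimDrawing ![A, C], D.IsRacSim ∧
      D.OnGrid (2 * (n : ℤ) - 1) (2 * (n : ℤ)) ∧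
      ∀ i : Fin 2, D.BendsAtMost i 1 := by
  subst hcard
  obtain ⟨L, h1, h2⟩ := exists_layout A C hn hA hC
  exact L.main A C h1 h2
end

section
/- For every four matchings M₁=(V,E₁), M₂=(V,E₂), M₃=(V,E₃), M₄=(V,E₄) on a common set V of n vertices, there exists a RacSim drawing of M₁, M₂, M₃ and M₄ on an integer grid of size 2n×2n in which every edge of every matching is drawn with at most one bend. -/
open SimpleGraph

/-- A matching on a vertex set: a graph in which every vertex has degree at most 1. -/
def IsMatchingGraph {V : Type} (M : SimpleGraph V) : Prop :=
  ∀ v : V, vdeg M v ≤ 1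


namespace RacAux

open Equiv Equiv.Perm

/-- A numbering of the cycles of a permutation. -/
lemma exists_key {W : Type} [Finite W] (ρ : Perm W) :
    ∃ k : W → ℕ, ∀ v w, k v = k w ↔ ρ.SameCycle v w := by
  classical
  let S := SameCycle.setoid ρ
  obtain ⟨n, ⟨e⟩⟩ := Finite.exists_equiv_fin (Quotient S)
  refine ⟨fun v => (e (Quotient.mk S v)).val, fun v w => ?_⟩
  rw [Fin.val_inj, e.apply_eq_iff_eq, Quotient.eq]
  rfl

lemma dihedral {W : Type} (F G : Perm W) (hF : F * F = 1) (hG : G * G = 1)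
    (hf : ∀ v, F v ≠ v) (hg : ∀ v, G v ≠ v) (v : W) : ¬ (G * F).SameCycle v (F v) := by
  rintro ⟨i, hi⟩
  have hFi : F⁻¹ = F := inv_eq_of_mul_eq_one_left hF
  have hGi : G⁻¹ = G := inv_eq_of_mul_eq_one_left hG
  have hc : ∀ j : ℤ, F * (G * F) ^ j = (G * F) ^ (-j) * F := by
    intro j
    have h1 : F * (G * F) * F⁻¹ = (G * F)⁻¹ := by
      rw [mul_inv_rev, hFi, hGi, mul_assoc, mul_assoc, hF, mul_one]
    have h2 := conj_zpow (i := j) (a := F) (b := G * F)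
    rw [h1, inv_zpow', eq_mul_inv_iff_mul_eq] at h2
    exact h2.symm
  rcases Int.even_or_odd' i with ⟨j, rfl | rfl⟩
  · apply hf (((G * F) ^ j) v)
    have := congrArg (fun p : Perm W => p v) (hc j)
    simp only [Perm.mul_apply] at this
    rw [this, ← hi, ← Perm.mul_apply, ← zpow_add]
    congr 2; ring
  · apply hg (F (((G * F) ^ j) v))
    have h3 := congrArg (fun p : Perm W => p v) (hc j)
    have h4 : F (((G * F) ^ j) v) = ((G * F) ^ (-j)) (F v) := h3
    have h5 : G (F (((G * F) ^ j) v)) = ((G * F) ^ (1 + j)) v := by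
      rw [zpow_add, zpow_one]; rfl
    rw [h5, h4, ← hi, ← Perm.mul_apply, ← zpow_add]
    congr 2; ring

lemma exists_coloring {W : Type} [Finite W] (f g : W → W)
    (hf : Function.Involutive f) (hg : Function.Involutive g)
    (hf' : ∀ v, f v ≠ v) (hg' : ∀ v, g v ≠ v) :
    ∃ c : W → Bool, ∀ v, c (f v) = !c v ∧ c (g v) = !c v := by
  classical
  let F : Perm W := hf.toPerm
  let G : Perm W := hg.toPerm
  obtain ⟨k, hk⟩ := exists_key (G * F)
  have hFF : F * F = 1 := by ext v; exact hf v
  have hGG : G * G = 1 := by ext v; exact hg v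
  have h1 : ∀ v, k v ≠ k (f v) := fun v h =>
    dihedral F G hFF hGG hf' hg' v ((hk _ _).1 h)
  have h2 : ∀ v, k (g v) = k (f v) := by
    intro v
    symm
    rw [hk]
    refine ⟨1, ?_⟩
    change g (f (f v)) = g v
    rw [hf]
  have h3 : ∀ v, k (f (g v)) = k v := by
    intro v
    rw [hk]
    refine ⟨1, ?_⟩
    change g (f (f (g v))) = v
    rw [hf, hg]
  refine ⟨fun v => decide (k v < k (f v)), fun v => ⟨?_, ?_⟩⟩
  · have := h1 v
    simp only [hf v]
    by_cases h : k v < k (f v)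
    · simp [h, h.le]
    · simp [h]; omega
  · have := h1 v
    simp only [h2, h3]
    by_cases h : k v < k (f v)
    · simp [h, h.le]
    · simp [h]; omega

/-- The partner function of a matching. -/
lemma exists_partner {V : Type} [Finite V] (M : SimpleGraph V) (h : IsMatchingGraph M) :
    ∃ f : V → V, Function.Involutive f ∧ ∀ u v, M.Adj u v → f u = v := by
  classical
  have huniq : ∀ u v w, M.Adj u v → M.Adj u w → v = w := by
    intro u v w h1 h2
    have := h u
    unfold vdeg at this
    rw [Set.ncard_le_one (Set.toFinite _)] at this
    exact this v h1 w h2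
  let f : V → V := fun u => if h : ∃ v, M.Adj u v then h.choose else u
  have hf : ∀ u v, M.Adj u v → f u = v := by
    intro u v huv
    have hex : ∃ v, M.Adj u v := ⟨v, huv⟩
    have : f u = hex.choose := dif_pos hex
    rw [this]
    exact huniq u _ _ hex.choose_spec huv
  refine ⟨f, fun u => ?_, hf⟩
  by_cases hex : ∃ v, M.Adj u v
  · obtain ⟨v, hv⟩ := hex
    rw [hf u v hv, hf v u hv.symm]
  · have : f u = u := dif_neg hex
    rw [this, this]

/-- Two involutions always admit a common proper colouring. -/
lemma exists_coloring' {V : Type} [Finite V] (f g : V → V)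
    (hf : Function.Involutive f) (hg : Function.Involutive g) :
    ∃ c : V → Bool, ∀ v, (f v ≠ v → c (f v) = !c v) ∧ (g v ≠ v → c (g v) = !c v) := by
  classical
  let ext : (V → V) → V × Bool → V × Bool := fun f p => if f p.1 = p.1 then (p.1, !p.2) else (f p.1, p.2)
  have h1 : ∀ f : V → V, Function.Involutive f → Function.Involutive (ext f) := by
    rintro f hf ⟨v, b⟩
    by_cases h : f v = v
    · simp [ext, h]
    · simp only [ext, h, if_false, hf v]
      exact if_neg (fun h' => h h'.symm)
  have h2 : ∀ f : V → V, ∀ p, ext f p ≠ p := by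
    rintro f ⟨v, b⟩
    by_cases h : f v = v
    · simp [ext, h]
    · simp [ext, h]
  obtain ⟨c, hc⟩ := exists_coloring (ext f) (ext g) (h1 f hf) (h1 g hg) (h2 f) (h2 g)
  refine ⟨fun v => c (v, false), fun v => ⟨fun h => ?_, fun h => ?_⟩⟩
  · have := (hc (v, false)).1
    simpa [ext, h] using this
  · have := (hc (v, false)).2
    simpa [ext, h] using this

lemma exists_struct {V : Type} [Finite V] (M N : SimpleGraph V)
    (hM : IsMatchingGraph M) (hN : IsMatchingGraph N) :
    ∃ (π : Perm V) (c : V → Bool), ∀ u v,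
      (M.Adj u v → c v = !c u ∧ (c u = false → π u = v)) ∧
      (N.Adj u v → c v = !c u ∧ (c u = true → π u = v)) := by
  classical
  cases nonempty_fintype V
  obtain ⟨f, hf, hfM⟩ := exists_partner M hM
  obtain ⟨g, hg, hgN⟩ := exists_partner N hN
  obtain ⟨c, hc⟩ := exists_coloring' f g hf hg
  let h : V → V := fun p => if c p then g p else f p
  have hcol : ∀ p, h p ≠ p → c (h p) = !c p := by
    intro p hp
    by_cases h0 : c p
    · have : h p = g p := by simp [h, h0]
      rw [this] at hp ⊢
      exact (hc p).2 hp
    · have : h p = f p := by simp [h, h0]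
      rw [this] at hp ⊢
      exact (hc p).1 hp
  have hinj : Set.InjOn h {p | h p ≠ p} := by
    intro p hp p' hp' heq
    have h1 := hcol p hp
    have h2 := hcol p' hp'
    rw [heq, h2] at h1
    have h3 : c p = c p' := by simpa using h1.symm
    by_cases h0 : c p'
    · simp only [h, h3, h0, if_true] at heq
      exact hg.injective heq
    · simp only [h, h3, h0] at heq
      exact hf.injective heq
  obtain ⟨e, he⟩ := Set.MapsTo.exists_equiv_extend_of_card_eq (t := (Finset.univ : Finset V))
    (by simp) (s := {p | h p ≠ p}) (f := h) (fun _ _ => by simp) hinj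
  let π : Perm V := e.trans (Equiv.subtypeUnivEquiv (fun x => Finset.mem_univ x))
  have hπ : ∀ p, h p ≠ p → π p = h p := fun p hp => he p hp
  refine ⟨π, c, fun u v => ⟨fun huv => ?_, fun huv => ?_⟩⟩
  · have h1 := hfM u v huv
    have h2 : f u ≠ u := by rw [h1]; exact huv.ne'
    refine ⟨by rw [← h1]; exact (hc u).1 h2, fun h0 => ?_⟩
    have h3 : h u = f u := by simp [h, h0]
    rw [hπ u (by rw [h3]; exact h2), h3, h1]
  · have h1 := hgN u v huv
    have h2 : g u ≠ u := by rw [h1]; exact huv.ne'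
    refine ⟨by rw [← h1]; exact (hc u).2 h2, fun h0 => ?_⟩
    have h3 : h u = g u := by simp [h, h0]
    rw [hπ u (by rw [h3]; exact h2), h3, h1]

end RacAux

namespace RacAux

open Equiv Equiv.Perm

section Core

variable {V : Type} [Fintype V]

/-- Number of steps from `a` to `v` along a permutation. -/
noncomputable def dist (σ : Perm V) (a v : V) : ℕ := sInf {k : ℕ | (σ ^ k) a = v}

lemma dist_spec (σ : Perm V) {a v : V} (h : σ.SameCycle a v) : (σ ^ dist σ a v) a = v := by
  have : {k : ℕ | (σ ^ k) a = v}.Nonempty := h.exists_nat_pow_eq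
  exact Nat.sInf_mem this

lemma dist_le (σ : Perm V) {a v : V} {k : ℕ} (h : (σ ^ k) a = v) : dist σ a v ≤ k :=
  Nat.sInf_le h

lemma dist_self (σ : Perm V) (a : V) : dist σ a a = 0 :=
  Nat.le_zero.1 (dist_le σ (k := 0) (by simp))

lemma dist_next (σ : Perm V) {a p : V} (h : σ.SameCycle a p) (hne : σ p ≠ a) :
    dist σ a (σ p) = dist σ a p + 1 := by
  have h1 := dist_spec σ h
  have h2 : σ.SameCycle a (σ p) := by simpa using h
  have h3 := dist_spec σ h2
  have h4 : dist σ a (σ p) ≤ dist σ a p + 1 := dist_le σ (by rw [pow_succ', Perm.mul_apply, h1])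
  rcases hj : dist σ a (σ p) with _ | j
  · rw [hj] at h3
    exact absurd h3.symm (by simpa using hne)
  · rw [hj, pow_succ', Perm.mul_apply] at h3
    have h5 := dist_le σ (σ.injective h3)
    omega

open Classical in
/-- The minimizer of `F` on the cycle-like set `S`. -/
noncomputable def amin (S : Set V) (F : V → ℕ) (d : V) : V :=
  if h : S.Nonempty then (Set.exists_min_image S F S.toFinite h).choose else d

lemma amin_mem {S : Set V} (F : V → ℕ) (d : V) (h : S.Nonempty) : amin S F d ∈ S := by
  rw [amin, dif_pos h]
  exact (Set.exists_min_image S F S.toFinite h).choose_spec.1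

lemma amin_le {S : Set V} (F : V → ℕ) (d : V) {w : V} (h : w ∈ S) :
    F (amin S F d) ≤ F w := by
  rw [amin, dif_pos ⟨w, h⟩]
  exact (Set.exists_min_image S F S.toFinite ⟨w, h⟩).choose_spec.2 w h

lemma amin_indep {S : Set V} (F : V → ℕ) (d d' : V) (h : S.Nonempty) :
    amin S F d = amin S F d' := by
  rw [amin, amin, dif_pos h, dif_pos h]

/-- The vertex of the `β`-class of `v` with smallest opposite class. -/
noncomputable def low (K : Bool → V → ℕ) (β : Bool) (v : V) : V :=
  amin {w | K β w = K β v} (K (!β)) v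

variable (K : Bool → V → ℕ)

lemma low_mem (β : Bool) (v : V) : K β (low K β v) = K β v :=
  amin_mem (S := {w | K β w = K β v}) (K (!β)) v ⟨v, rfl⟩

lemma low_le (β : Bool) {v w : V} (h : K β w = K β v) : K (!β) (low K β v) ≤ K (!β) w :=
  amin_le (S := {w | K β w = K β v}) (K (!β)) v h

lemma low_congr (β : Bool) {v w : V} (h : K β w = K β v) : low K β w = low K β v := by
  unfold low
  rw [h]
  exact amin_indep _ _ _ ⟨v, rfl⟩

open Classical in
/-- The anchor (starting vertex) of the `β`-cycle of `v`. -/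
noncomputable def anch (π : Bool → Perm V) (K : Bool → V → ℕ) (β : Bool) (v : V) : V :=
  if h : β = true ∧ K β (low K (!β) (low K β v)) = K β v then low K β v
  else amin {w | K β w = K β v ∧ K (!β) w = K (!β) (low K β v)}
    (fun w => dist (π (!β)) (anch π K (!β) (low K β v)) w) (low K β v)
termination_by 2 * (K β v + K (!β) (low K β v)) + (if β then 0 else 1)
decreasing_by
  have h1 : K β (low K (!β) (low K β v)) ≤ K β v := by
    have := low_le K (!β) (v := low K β v) (w := low K β v) rfl
    rw [Bool.not_not] at this
    rwa [low_mem K] at this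
  rw [Bool.not_not]
  cases β
  · simp at h1 ⊢; omega
  · simp at h h1 ⊢; omega

variable (π : Bool → Perm V)

lemma anch_mem (β : Bool) (v : V) : K β (anch π K β v) = K β v := by
  rw [anch]
  split_ifs with h
  · exact low_mem K β v
  · exact (amin_mem (S := {w | K β w = K β v ∧ K (!β) w = K (!β) (low K β v)}) _ _
      ⟨low K β v, low_mem K β v, rfl⟩).1

lemma anch_congr (β : Bool) {v w : V} (h : K β w = K β v) : anch π K β w = anch π K β v := by
  rw [anch, anch.eq_1 π K β v, low_congr K β h, h]

/-- The sorting key for direction `β`. -/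
noncomputable def key (β : Bool) (v : V) : ℕ ×ₗ ℕ :=
  toLex (K β v, dist (π β) (anch π K β v) v)

lemma key_lt {β : Bool} {v w : V} : key K π β v < key K π β w ↔
    K β v < K β w ∨ K β v = K β w ∧
      dist (π β) (anch π K β v) v < dist (π β) (anch π K β w) w := by
  rw [key, key, Prod.Lex.toLex_lt_toLex]

lemma key_le {β : Bool} {v w : V} : key K π β v ≤ key K π β w ↔
    K β v < K β w ∨ K β v = K β w ∧
      dist (π β) (anch π K β v) v ≤ dist (π β) (anch π K β w) w := by
  rw [key, key, Prod.Lex.toLex_le_toLex]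

lemma key_inj (hK : ∀ β v w, K β v = K β w ↔ (π β).SameCycle v w) (β : Bool) : Function.Injective (key K π β) := by
  intro v w h
  have h1 : K β v = K β w ∧ dist (π β) (anch π K β v) v = dist (π β) (anch π K β w) w := by
    have := congrArg ofLex h
    simpa [key] using this
  obtain ⟨h1, h2⟩ := h1
  have h3 := dist_spec (π β) ((hK β _ _).1 (anch_mem K π β v))
  have h4 := dist_spec (π β) ((hK β _ _).1 (anch_mem K π β w))
  rw [← h3, ← h4, h2, anch_congr K π β h1]

/-- The anchor of a `β`-cycle is the smallest one in the opposite direction. -/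
lemma anch_min (hK : ∀ β v w, K β v = K β w ↔ (π β).SameCycle v w) (β : Bool) {v w : V}
    (h : K β w = K β v) :
    key K π (!β) (anch π K β v) ≤ key K π (!β) w := by
  by_cases hb : β = true ∧ K β (low K (!β) (low K β v)) = K β v
  · have ha : anch π K β v = low K β v := by rw [anch, dif_pos hb]
    obtain ⟨rfl, hm⟩ := hb
    simp only [Bool.not_true] at *
    have hlow : K true (low K true v) = K true v := low_mem K true v
    have h0 : anch π K true (low K false (low K true v)) = low K true v := by
      rw [anch_congr K π true hm, ha]
    have h1 : anch π K false (low K true v) = low K true v := by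
      rw [anch, dif_neg (by simp)]
      simp only [Bool.not_false]
      rw [h0, hm]
      set S : Set V := {w | K false w = K false (low K true v) ∧ K true w = K true v} with hS
      have hmem : low K true v ∈ S := ⟨rfl, hlow⟩
      have h2 := amin_le (S := S) (fun w => dist (π true) (low K true v) w)
        (low K false (low K true v)) hmem
      have h3 := amin_mem (S := S) (fun w => dist (π true) (low K true v) w)
        (low K false (low K true v)) ⟨_, hmem⟩
      set z := amin S (fun w => dist (π true) (low K true v) w) (low K false (low K true v))
      simp only [dist_self, Nat.le_zero] at h2
      have h4 := dist_spec (π true) ((hK true (low K true v) z).1 (hlow.trans h3.2.symm))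
      rw [h2] at h4
      simpa using h4.symm
    rw [ha, key_le, h1, dist_self]
    rcases (low_le K true h).lt_or_eq with h5 | h5
    · exact Or.inl h5
    · exact Or.inr ⟨h5, Nat.zero_le _⟩
  · set S : Set V := {w | K β w = K β v ∧ K (!β) w = K (!β) (low K β v)} with hS
    have ha : anch π K β v = amin S
        (fun w => dist (π (!β)) (anch π K (!β) (low K β v)) w) (low K β v) := by
      rw [anch, dif_neg hb]
    have hmem : anch π K β v ∈ S := by
      rw [ha]; exact amin_mem _ _ ⟨low K β v, low_mem K β v, rfl⟩
    rw [key_le, hmem.2, anch_congr K π (!β) hmem.2]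
    rcases (low_le K β h).lt_or_eq with h5 | h5
    · exact Or.inl h5
    · refine Or.inr ⟨h5, ?_⟩
      rw [anch_congr K π (!β) h5.symm, ha]
      exact amin_le (S := S) (fun w => dist (π (!β)) (anch π K (!β) (low K β v)) w) _
        ⟨h, h5.symm⟩

lemma key_cases (hK : ∀ β v w, K β v = K β w ↔ (π β).SameCycle v w) (β : Bool) (p : V) :
    (key K π β p < key K π β (π β p) ∧
      ∀ w, key K π β w < key K π β (π β p) → key K π β w ≤ key K π β p) ∨
    (key K π β (π β p) ≤ key K π β p ∧
      (∀ w, key K π β (π β p) < key K π β w → key K π β w ≤ key K π β p →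
        key K π (!β) (π β p) < key K π (!β) w) ∧
      (∀ w, key K π β (π β p) < key K π β w → key K π β w < key K π β p →
        key K π (!β) (π β p) < key K π (!β) (π β w))) := by
  have hKq : ∀ w, K β (π β w) = K β w := fun w => by
    rw [hK]; exact (SameCycle.refl _ _).apply_left
  have haq : ∀ w, anch π K β (π β w) = anch π K β w := fun w => anch_congr K π β (hKq w)
  have hsc : (π β).SameCycle (anch π K β p) p := (hK _ _ _).1 (anch_mem K π β p)
  by_cases hq : π β p = anch π K β p
  · right
    have hd : dist (π β) (anch π K β p) (π β p) = 0 := by rw [hq, dist_self]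
    have hcl : ∀ w, key K π β (π β p) < key K π β w → key K π β w ≤ key K π β p →
        K β w = K β p := by
      intro w h1 h2
      rw [key_lt, hKq] at h1
      rw [key_le] at h2
      omega
    have hmin : ∀ w, K β w = K β p → w ≠ π β p → key K π (!β) (π β p) < key K π (!β) w := by
      intro w h1 h2
      rw [hq]
      refine lt_of_le_of_ne (anch_min K π hK β h1) (fun h3 => h2 ?_)
      rw [hq]
      exact (key_inj K π hK (!β) h3).symm
    refine ⟨?_, ?_, ?_⟩
    · rw [key_le, hKq, haq, hd]
      exact Or.inr ⟨rfl, Nat.zero_le _⟩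
    · intro w h1 h2
      refine hmin w (hcl w h1 h2) ?_
      rintro rfl
      exact lt_irrefl _ h1
    · intro w h1 h2
      refine hmin _ ((hKq w).trans (hcl w h1 h2.le)) ?_
      intro h3
      rw [(π β).injective h3] at h2
      exact lt_irrefl _ h2
  · left
    have hd := dist_next (π β) hsc hq
    constructor
    · rw [key_lt, hKq, haq, hd]
      exact Or.inr ⟨rfl, Nat.lt_succ_self _⟩
    · intro w h1
      rw [key_lt, hKq, haq, hd] at h1
      rw [key_le]
      omega

/-- The combinatorial core: the coordinates of the vertices. -/
lemma exists_coords : ∃ X : Bool → V → ℕ, (∀ β, Function.Injective (X β)) ∧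
    (∀ β v, X β v < Fintype.card V) ∧ ∀ β p,
      X β (π β p) = X β p + 1 ∨ (X β (π β p) ≤ X β p ∧
        (∀ w, X β (π β p) < X β w → X β w ≤ X β p → X (!β) (π β p) < X (!β) w) ∧
        (∀ w, X β (π β p) < X β w → X β w < X β p → X (!β) (π β p) < X (!β) (π β w))) := by
  classical
  choose K hK using fun β => exists_key (π β)
  let F := key K π
  let X : Bool → V → ℕ := fun β v => (Finset.univ.filter (fun w => F β w < F β v)).card
  have hlt : ∀ β v w, F β v < F β w → X β v < X β w := by
    intro β v w h
    apply Finset.card_lt_card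
    refine Finset.ssubset_iff_of_subset ?_ |>.2 ⟨v, by simpa using h, by simp⟩
    intro z hz
    simp only [Finset.mem_filter, Finset.mem_univ, true_and] at hz ⊢
    exact hz.trans h
  have hinj : ∀ β, Function.Injective (F β) := fun β => key_inj K π hK β
  have hle : ∀ β v w, F β v ≤ F β w → X β v ≤ X β w := by
    intro β v w h
    rcases h.lt_or_eq with h | h
    · exact (hlt β v w h).le
    · rw [hinj β h]
  have hlt' : ∀ β v w, X β v < X β w ↔ F β v < F β w := fun β v w =>
    ⟨fun h => lt_of_not_ge fun h' => absurd (hle β w v h') (not_le.2 h), hlt β v w⟩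
  have hle' : ∀ β v w, X β v ≤ X β w ↔ F β v ≤ F β w := fun β v w =>
    ⟨fun h => le_of_not_gt fun h' => absurd (hlt β w v h') (not_lt.2 h), hle β v w⟩
  refine ⟨X, fun β v w h => hinj β (le_antisymm ((hle' _ _ _).1 h.le) ((hle' _ _ _).1 h.ge)),
    fun β v => ?_, fun β p => ?_⟩
  · apply Finset.card_lt_univ_of_notMem (x := v)
    simp
  · simp only [hlt', hle']
    rcases key_cases K π hK β p with ⟨h1, h2⟩ | h
    · left
      have : Finset.univ.filter (fun w => F β w < F β (π β p)) =
          insert p (Finset.univ.filter (fun w => F β w < F β p)) := by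
        ext w
        simp only [Finset.mem_filter, Finset.mem_univ, true_and, Finset.mem_insert]
        constructor
        · intro h
          rcases (h2 w h).lt_or_eq with h | h
          · exact Or.inr h
          · exact Or.inl (hinj β h)
        · rintro (rfl | h)
          · exact h1
          · exact h.trans h1
      simp only [X]
      rw [this, Finset.card_insert_of_notMem (by simp)]
    · right; exact h

end Core
end RacAux

namespace RacAux

open Equiv Equiv.Perm

section Geometry

/-- The point with coordinate `a` in direction `β` and `b` in the other direction. -/
def co (β : Bool) (a b : ℝ) : ℝ × ℝ := if β then (b, a) else (a, b)

/-- The coordinate of a point in direction `β`. -/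
def cr (β : Bool) (r : ℝ × ℝ) : ℝ := if β then r.2 else r.1

lemma mem_segment_co {β : Bool} {a b a' b' : ℝ} {r : ℝ × ℝ}
    (h : r ∈ segment ℝ (co β a b) (co β a' b')) :
    ∃ t : ℝ, 0 ≤ t ∧ t ≤ 1 ∧ cr β r = a + t * (a' - a) ∧ cr (!β) r = b + t * (b' - b) := by
  obtain ⟨s, t, hs, ht, hst, rfl⟩ := h
  refine ⟨t, ht, by linarith, ?_, ?_⟩ <;> obtain rfl : s = 1 - t := by linarith
  all_goals cases β <;> simp [co, cr] <;> ring

lemma mem_openSegment_co {β : Bool} {a b a' b' : ℝ} {r : ℝ × ℝ}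
    (h : r ∈ openSegment ℝ (co β a b) (co β a' b')) :
    ∃ t : ℝ, 0 < t ∧ t < 1 ∧ cr β r = a + t * (a' - a) ∧ cr (!β) r = b + t * (b' - b) := by
  obtain ⟨s, t, hs, ht, hst, rfl⟩ := h
  refine ⟨t, ht, by linarith, ?_, ?_⟩ <;> obtain rfl : s = 1 - t := by linarith
  all_goals cases β <;> simp [co, cr] <;> ring

lemma midpoint_mem {a b r r' : ℝ × ℝ} (h : r ∈ segment ℝ a b) (h' : r' ∈ segment ℝ a b)
    (hne : r ≠ r') : (1 / 2 : ℝ) • (r + r') ∈ openSegment ℝ a b := by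
  obtain ⟨s, t, hs, ht, hst, rfl⟩ := h
  obtain ⟨s', t', hs', ht', hst', rfl⟩ := h'
  have hne' : t ≠ t' := by
    rintro rfl
    apply hne
    have : s = s' := by linarith
    rw [this]
  refine ⟨(s + s') / 2, (t + t') / 2, ?_, ?_, by linarith, ?_⟩
  · by_contra h
    apply hne'; linarith
  · by_contra h
    apply hne'; linarith
  · ext <;> simp <;> ring

lemma subsingleton_of_not_cross {s t : (ℝ × ℝ) × (ℝ × ℝ)} (h : ¬ SegCross s t) :
    (segment ℝ s.1 s.2 ∩ segment ℝ t.1 t.2).Subsingleton := by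
  intro r hr r' hr'
  by_contra hne
  exact h ⟨_, midpoint_mem hr.1 hr'.1 hne, midpoint_mem hr.2 hr'.2 hne⟩

variable {V : Type} (X : Bool → V → ℕ) (π : Bool → Perm V)

/-- The axis-parallel segment of the edge from `p` to `π β p`. -/
def segV (β : Bool) (p : V) : (ℝ × ℝ) × (ℝ × ℝ) :=
  (co β (2 * X β p + 2) (2 * X (!β) p + 2), co β (2 * X β p + 2) (2 * X (!β) (π β p) + 1))

/-- The slanted segment of the edge from `p` to `π β p`. -/
def segS (β : Bool) (p : V) : (ℝ × ℝ) × (ℝ × ℝ) :=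
  (co β (2 * X β p + 2) (2 * X (!β) (π β p) + 1),
    co β (2 * X β (π β p) + 2) (2 * X (!β) (π β p) + 2))

/-- The polyline of the edge from `p` to `π β p`. -/
def path (β : Bool) (p : V) : Polyline :=
  ⟨2, ![co β (2 * X β p + 2) (2 * X (!β) p + 2),
    co β (2 * X β p + 2) (2 * X (!β) (π β p) + 1),
    co β (2 * X β (π β p) + 2) (2 * X (!β) (π β p) + 2)]⟩

lemma path_segs {β : Bool} {p : V} {s : (ℝ × ℝ) × (ℝ × ℝ)} (h : s ∈ (path X π β p).segs) :
    s = segV X π β p ∨ s = segS X π β p := by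
  obtain ⟨i, rfl⟩ := h
  change Fin 2 at i
  fin_cases i
  · left; rfl
  · right; rfl

lemma path_curve {β : Bool} {p : V} {r : ℝ × ℝ} (h : r ∈ (path X π β p).curve) :
    r ∈ segment ℝ (segV X π β p).1 (segV X π β p).2 ∨
      r ∈ segment ℝ (segS X π β p).1 (segS X π β p).2 := by
  rw [Polyline.curve, Set.mem_iUnion] at h
  obtain ⟨i, h⟩ := h
  change Fin 2 at i
  fin_cases i
  · left; exact h
  · right; exact h

/-- The conditions on the coordinates. -/
def Coords : Prop := (∀ β, Function.Injective (X β)) ∧ ∀ β p,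
      X β (π β p) = X β p + 1 ∨ (X β (π β p) ≤ X β p ∧
        (∀ w, X β (π β p) < X β w → X β w ≤ X β p → X (!β) (π β p) < X (!β) w) ∧
        (∀ w, X β (π β p) < X β w → X β w < X β p → X (!β) (π β p) < X (!β) (π β w)))

variable {X π}

lemma segV_closed {β : Bool} {p : V} {r : ℝ × ℝ}
    (h : r ∈ segment ℝ (segV X π β p).1 (segV X π β p).2) :
    cr β r = 2 * X β p + 2 ∧
    (2 * (X (!β) p : ℝ) + 2 ≤ cr (!β) r ∨ 2 * (X (!β) (π β p) : ℝ) + 1 ≤ cr (!β) r) := by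
  obtain ⟨t, h0, h1, h2, h3⟩ := mem_segment_co h
  refine ⟨by rw [h2]; ring, ?_⟩
  rw [h3]
  rcases le_total (2 * (X (!β) p : ℝ) + 2) (2 * (X (!β) (π β p) : ℝ) + 1) with hl | hl
  · left; nlinarith
  · right; nlinarith

lemma segS_closed {β : Bool} {p : V} {r : ℝ × ℝ}
    (h : r ∈ segment ℝ (segS X π β p).1 (segS X π β p).2) :
    2 * (X (!β) (π β p) : ℝ) + 1 ≤ cr (!β) r ∧ cr (!β) r ≤ 2 * X (!β) (π β p) + 2 ∧
    (X β (π β p) ≤ X β p →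
      2 * (X β (π β p) : ℝ) + 2 ≤ cr β r ∧ cr β r ≤ 2 * X β p + 2) ∧
    (X β p ≤ X β (π β p) →
      2 * (X β p : ℝ) + 2 ≤ cr β r ∧ cr β r ≤ 2 * X β (π β p) + 2) := by
  obtain ⟨t, h0, h1, h2, h3⟩ := mem_segment_co h
  refine ⟨by rw [h3]; nlinarith, by rw [h3]; nlinarith, fun hx => ?_, fun hx => ?_⟩
  all_goals
    have hx' := (Nat.cast_le (α := ℝ)).2 hx
    rw [h2]
    constructor <;> nlinarith

lemma segS_open {β : Bool} {p : V} {r : ℝ × ℝ}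
    (h : r ∈ openSegment ℝ (segS X π β p).1 (segS X π β p).2) :
    2 * (X (!β) (π β p) : ℝ) + 1 < cr (!β) r ∧ cr (!β) r < 2 * X (!β) (π β p) + 2 ∧
    (X β (π β p) < X β p →
      2 * (X β (π β p) : ℝ) + 2 < cr β r ∧ cr β r < 2 * X β p + 2) ∧
    (X β p < X β (π β p) →
      2 * (X β p : ℝ) + 2 < cr β r ∧ cr β r < 2 * X β (π β p) + 2) ∧
    (X β (π β p) = X β p + 1 → cr β r - (2 * X β (π β p) + 2) =
        2 * (cr (!β) r - (2 * X (!β) (π β p) + 2))) := by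
  obtain ⟨t, h0, h1, h2, h3⟩ := mem_openSegment_co h
  refine ⟨by rw [h3]; nlinarith, by rw [h3]; nlinarith, fun hx => ?_, fun hx => ?_, fun hx => ?_⟩
  · have hx' := (Nat.cast_lt (α := ℝ)).2 hx
    rw [h2]
    constructor <;> nlinarith
  · have hx' := (Nat.cast_lt (α := ℝ)).2 hx
    rw [h2]
    constructor <;> nlinarith
  · rw [h2, h3, hx]; push_cast; ring

lemma openS {s : (ℝ × ℝ) × (ℝ × ℝ)} {r : ℝ × ℝ} (h : r ∈ openSegment ℝ s.1 s.2) :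
    r ∈ segment ℝ s.1 s.2 := openSegment_subset_segment _ _ _ h

/-- Two axis-parallel segments of one direction are disjoint. -/
lemma VV (hC : Coords X π) {β : Bool} {p p' : V} (hne : p ≠ p') {r : ℝ × ℝ}
    (h : r ∈ segment ℝ (segV X π β p).1 (segV X π β p).2)
    (h' : r ∈ segment ℝ (segV X π β p').1 (segV X π β p').2) : False := by
  have h1 := (segV_closed h).1
  rw [(segV_closed h').1] at h1
  apply hne
  apply hC.1 β
  have : (X β p : ℝ) = X β p' := by linarith
  exact_mod_cast this

/-- Two slanted segments of one direction are disjoint. -/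
lemma SS (hC : Coords X π) {β : Bool} {p p' : V} (hne : p ≠ p') {r : ℝ × ℝ}
    (h : r ∈ segment ℝ (segS X π β p).1 (segS X π β p).2)
    (h' : r ∈ segment ℝ (segS X π β p').1 (segS X π β p').2) : False := by
  obtain ⟨h1, h2, -⟩ := segS_closed h
  obtain ⟨h3, h4, -⟩ := segS_closed h'
  apply hne
  apply (π β).injective
  apply hC.1 (!β)
  have a1 : (2 * X (!β) (π β p) + 1 : ℝ) ≤ 2 * X (!β) (π β p') + 2 := by linarith
  have a2 : (2 * X (!β) (π β p') + 1 : ℝ) ≤ 2 * X (!β) (π β p) + 2 := by linarith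
  have a1' : 2 * X (!β) (π β p) + 1 ≤ 2 * X (!β) (π β p') + 2 := by exact_mod_cast a1
  have a2' : 2 * X (!β) (π β p') + 1 ≤ 2 * X (!β) (π β p) + 2 := by exact_mod_cast a2
  omega

/-- A slanted segment and an axis-parallel one of the same direction, strict position. -/
lemma SV_strict (hC : Coords X π) {β : Bool} {p p' : V} {r : ℝ × ℝ}
    (h : r ∈ segment ℝ (segS X π β p).1 (segS X π β p).2)
    (h' : r ∈ segment ℝ (segV X π β p').1 (segV X π β p').2)
    (hp : X β p' ≠ X β p) (hq : X β p' ≠ X β (π β p)) : False := by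
  obtain ⟨h1, h2, h3, h4⟩ := segS_closed h
  obtain ⟨h5, h6⟩ := segV_closed h'
  rw [h5] at h3 h4
  rcases hC.2 β p with hc | ⟨hle, hc1, hc2⟩
  · obtain ⟨a1, a2⟩ := h4 (by omega)
    have a1' : 2 * X β p + 2 ≤ 2 * X β p' + 2 := by exact_mod_cast a1
    have a2' : 2 * X β p' + 2 ≤ 2 * X β (π β p) + 2 := by exact_mod_cast a2
    omega
  · obtain ⟨a1, a2⟩ := h3 hle
    have a1' : 2 * X β (π β p) + 2 ≤ 2 * X β p' + 2 := by exact_mod_cast a1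
    have a2' : 2 * X β p' + 2 ≤ 2 * X β p + 2 := by exact_mod_cast a2
    have b1 := hc1 p' (by omega) (by omega)
    have b2 := hc2 p' (by omega) (by omega)
    have b1' : (X (!β) (π β p) + 1 : ℝ) ≤ X (!β) p' := by exact_mod_cast b1
    have b2' : (X (!β) (π β p) + 1 : ℝ) ≤ X (!β) (π β p') := by exact_mod_cast b2
    rcases h6 with h6 | h6 <;> linarith

lemma SV_closed (hC : Coords X π) {β : Bool} {p p' : V} {r : ℝ × ℝ}
    (h : r ∈ segment ℝ (segS X π β p).1 (segS X π β p).2)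
    (h' : r ∈ segment ℝ (segV X π β p').1 (segV X π β p').2)
    (hp : p' ≠ p) (hq : p' ≠ π β p) : False :=
  SV_strict hC h h' (fun e => hp (hC.1 β e)) (fun e => hq (hC.1 β e))

lemma SV_open (hC : Coords X π) {β : Bool} {p p' : V} {r : ℝ × ℝ}
    (h : r ∈ openSegment ℝ (segS X π β p).1 (segS X π β p).2)
    (h' : r ∈ openSegment ℝ (segV X π β p').1 (segV X π β p').2)
    (hp : p' ≠ p) (hpp : π β p ≠ p) : False := by
  refine SV_strict hC (openS h) (openS h') (fun e => hp (hC.1 β e)) (fun e => ?_)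
  obtain ⟨-, -, h3, h4, -⟩ := segS_open h
  have h5 := (segV_closed (openS h')).1
  rw [h5, e] at h3 h4
  rcases lt_trichotomy (X β (π β p)) (X β p) with hl | hl | hl
  · exact lt_irrefl _ (h3 hl).1
  · exact hpp (hC.1 β hl)
  · exact lt_irrefl _ (h4 hl).2

/-- Slanted against axis-parallel segments in different directions. -/
lemma SV_cross {β : Bool} {p p' : V} {r : ℝ × ℝ}
    (h : r ∈ openSegment ℝ (segS X π β p).1 (segS X π β p).2)
    (h' : r ∈ openSegment ℝ (segV X π (!β) p').1 (segV X π (!β) p').2) : False := by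
  obtain ⟨h1, h2, -⟩ := segS_open h
  rw [(segV_closed (openS h')).1] at h1 h2
  have h1' : 2 * X (!β) (π β p) + 1 < 2 * X (!β) p' + 2 := by exact_mod_cast h1
  have h2' : 2 * X (!β) p' + 2 < 2 * X (!β) (π β p) + 2 := by exact_mod_cast h2
  omega

/-- Slanted segments of different directions do not cross. -/
lemma SS_cross (hC : Coords X π) {β : Bool} {p p' : V} {r : ℝ × ℝ}
    (hp : π β p ≠ p) (hp' : π (!β) p' ≠ p')
    (h : r ∈ openSegment ℝ (segS X π β p).1 (segS X π β p).2)
    (h' : r ∈ openSegment ℝ (segS X π (!β) p').1 (segS X π (!β) p').2) : False := by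
  obtain ⟨a1, a2, a3, a4, a5⟩ := segS_open h
  obtain ⟨b1, b2, b3, b4, b5⟩ := segS_open h'
  have c1 := hC.2 β p
  have c2 := hC.2 (!β) p'
  have n1 : X β (π β p) ≠ X β p := fun e => hp (hC.1 _ e)
  have n2 : X (!β) (π (!β) p') ≠ X (!β) p' := fun e => hp' (hC.1 _ e)
  rw [Bool.not_not] at b1 b2 b5 c2
  set q := π β p
  set q' := π (!β) p'
  have key1 : X β q = X β p + 1 → X β q' = X β q := by
    intro hc
    obtain ⟨d1, d2⟩ := a4 (by omega)
    have e1 : (2 * X β p + 2 : ℝ) < 2 * X β q' + 2 := by linarith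
    have e2 : (2 * X β q' + 1 : ℝ) < 2 * X β q + 2 := by linarith
    have e1' : 2 * X β p + 2 < 2 * X β q' + 2 := by exact_mod_cast e1
    have e2' : 2 * X β q' + 1 < 2 * X β q + 2 := by exact_mod_cast e2
    omega
  have key2 : X (!β) q' = X (!β) p' + 1 → X (!β) q = X (!β) q' := by
    intro hc
    obtain ⟨d1, d2⟩ := b4 (by omega)
    have e1 : (2 * X (!β) p' + 2 : ℝ) < 2 * X (!β) q + 2 := by linarith
    have e2 : (2 * X (!β) q + 1 : ℝ) < 2 * X (!β) q' + 2 := by linarith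
    have e1' : 2 * X (!β) p' + 2 < 2 * X (!β) q + 2 := by exact_mod_cast e1
    have e2' : 2 * X (!β) q + 1 < 2 * X (!β) q' + 2 := by exact_mod_cast e2
    omega
  rcases c1 with c1 | ⟨l1, m1, -⟩ <;> rcases c2 with c2 | ⟨l2, m2, -⟩
  · have f1 := a5 c1
    have f2 := b5 c2
    rw [key1 c1] at f2 b2
    rw [key2 c2] at f1
    linarith
  · obtain ⟨d1, d2⟩ := b3 (by omega)
    rw [← hC.1 β (key1 c1)] at a2
    linarith
  · obtain ⟨d1, d2⟩ := a3 (by omega)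
    rw [hC.1 (!β) (key2 c2)] at d1
    linarith
  · obtain ⟨d1, d2⟩ := a3 (by omega)
    obtain ⟨d3, d4⟩ := b3 (by omega)
    have e1 : (2 * X β q + 2 : ℝ) < 2 * X β q' + 2 := by linarith
    have e2 : (2 * X β q' + 1 : ℝ) < 2 * X β p + 2 := by linarith
    have e1' : 2 * X β q + 2 < 2 * X β q' + 2 := by exact_mod_cast e1
    have e2' : 2 * X β q' + 1 < 2 * X β p + 2 := by exact_mod_cast e2
    have e3 := m1 q' (by omega) (by omega)
    have e3' : (X (!β) q : ℝ) < X (!β) q' := by exact_mod_cast e3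
    linarith

lemma not_cross_same (hC : Coords X π) {β : Bool} {p p' : V} (hne : p ≠ p')
    (hp : π β p ≠ p) (hp' : π β p' ≠ p') {s t : (ℝ × ℝ) × (ℝ × ℝ)}
    (hs : s ∈ (path X π β p).segs) (ht : t ∈ (path X π β p').segs) : ¬ SegCross s t := by
  rintro ⟨r, h1, h2⟩
  rcases path_segs X π hs with rfl | rfl <;> rcases path_segs X π ht with rfl | rfl
  · exact VV hC hne (openS h1) (openS h2)
  · exact SV_open hC h2 h1 hne hp'
  · exact SV_open hC h1 h2 hne.symm hp
  · exact SS hC hne (openS h1) (openS h2)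

lemma cross_diff (hC : Coords X π) {β : Bool} {p p' : V}
    (hp : π β p ≠ p) (hp' : π (!β) p' ≠ p') {s t : (ℝ × ℝ) × (ℝ × ℝ)}
    (hs : s ∈ (path X π β p).segs) (ht : t ∈ (path X π (!β) p').segs) :
    (SegCross s t → SegPerp s t) ∧
      (segment ℝ s.1 s.2 ∩ segment ℝ t.1 t.2).Subsingleton := by
  have main : ∀ {s t : (ℝ × ℝ) × (ℝ × ℝ)}, ¬ SegCross s t → (SegCross s t → SegPerp s t) ∧
      (segment ℝ s.1 s.2 ∩ segment ℝ t.1 t.2).Subsingleton :=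
    fun h => ⟨fun h' => absurd h' h, subsingleton_of_not_cross h⟩
  rcases path_segs X π hs with rfl | rfl <;> rcases path_segs X π ht with rfl | rfl
  · constructor
    · intro _
      cases β <;> simp [SegPerp, segV, co]
    · intro r hr r' hr'
      have h1 := (segV_closed hr.1).1
      have h2 := (segV_closed hr.2).1
      have h1' := (segV_closed hr'.1).1
      have h2' := (segV_closed hr'.2).1
      rw [← h1'] at h1
      rw [← h2'] at h2
      cases β
      · exact Prod.ext h1 h2
      · exact Prod.ext h2 h1
  · apply main
    rintro ⟨r, h1, h2⟩
    refine SV_cross h2 (p' := p) ?_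
    rw [Bool.not_not]
    exact h1
  · apply main
    rintro ⟨r, h1, h2⟩
    exact SV_cross h1 h2
  · apply main
    rintro ⟨r, h1, h2⟩
    exact SS_cross hC hp hp' h1 h2

lemma disjoint_same (hC : Coords X π) {β : Bool} {p p' : V} (hne : p ≠ p')
    (hp : π β p ≠ p') (hp' : π β p' ≠ p) {r : ℝ × ℝ}
    (h : r ∈ (path X π β p).curve) (h' : r ∈ (path X π β p').curve) : False := by
  rcases path_curve X π h with h1 | h1 <;> rcases path_curve X π h' with h2 | h2
  · exact VV hC hne h1 h2
  · exact SV_closed hC h2 h1 hne hp'.symm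
  · exact SV_closed hC h1 h2 hne.symm hp.symm
  · exact SS hC hne h1 h2

end Geometry
end RacAux

namespace RacAux

open Equiv Equiv.Perm

lemma main {V : Type} [Fintype V] (G : Fin 4 → SimpleGraph V) (B C : Fin 4 → Bool)
    (hBC : ∀ i j, i ≠ j → B i = B j → C i ≠ C j) (π : Bool → Perm V) (c : Bool → V → Bool)
    (hG : ∀ i u v, (G i).Adj u v → c (B i) v = !c (B i) u ∧ (c (B i) u = C i → π (B i) u = v)) :
    ∃ D : SimDrawing G, D.IsRacSim ∧
      D.OnGrid (2 * (Fintype.card V : ℤ)) (2 * (Fintype.card V : ℤ)) ∧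
      ∀ i : Fin 4, D.BendsAtMost i 1 := by
  classical
  obtain ⟨X, hinj, hcard, hX⟩ := exists_coords π
  have hC : Coords X π := ⟨hinj, hX⟩
  -- orientation of the edges
  let Q : Fin 4 → Sym2 V → V → Prop := fun i e p =>
    e = s(p, π (B i) p) ∧ c (B i) p = C i ∧ c (B i) (π (B i) p) = !C i
  have hQ : ∀ i, ∀ e ∈ (G i).edgeSet, ∃ p, Q i e p := by
    intro i e
    induction e using Sym2.ind with
    | _ u v =>
      intro he
      have huv : (G i).Adj u v := he
      have h1 := hG i u v huv
      have h2 := hG i v u huv.symm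
      by_cases h : c (B i) u = C i
      · have h3 := h1.2 h
        exact ⟨u, by rw [h3], h, by rw [h3, h1.1, h]⟩
      · have h0 : c (B i) v = C i := by
          rw [h1.1]
          cases hu : c (B i) u <;> cases hc : C i <;> simp_all
        have h3 := h2.2 h0
        exact ⟨v, by rw [h3, Sym2.eq_swap], h0, by rw [h3, h2.1, h0]⟩
  let P : Fin 4 → Sym2 V → V := fun i e => if h : ∃ p, Q i e p then h.choose else e.out.1
  have hP : ∀ i, ∀ e ∈ (G i).edgeSet, Q i e (P i e) := by
    intro i e he
    have h := hQ i e he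
    have : P i e = h.choose := dif_pos h
    rw [this]
    exact h.choose_spec
  have hfix : ∀ i, ∀ e ∈ (G i).edgeSet, π (B i) (P i e) ≠ P i e := by
    intro i e he h
    obtain ⟨-, h1, h2⟩ := hP i e he
    rw [h, h1] at h2
    simp at h2
  let pos : V → ℝ × ℝ := fun v => (2 * X false v + 2, 2 * X true v + 2)
  have hpos : ∀ β v, co β (2 * X β v + 2) (2 * X (!β) v + 2) = pos v := by
    intro β v
    cases β <;> rfl
  have hne : ∀ i, ∀ e ∈ (G i).edgeSet, ∀ j, ∀ e' ∈ (G j).edgeSet, (i ≠ j ∨ e ≠ e') →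
      B i = B j → P i e ≠ P j e' := by
    intro i e he j e' he' hor hB hPP
    obtain ⟨h1, h2, -⟩ := hP i e he
    obtain ⟨h3, h4, -⟩ := hP j e' he'
    by_cases hij : i = j
    · subst hij
      rcases hor with h | h
      · exact h rfl
      · apply h
        rw [h1, h3, hPP]
    · apply hBC i j hij hB
      rw [← h2, ← h4, hB, hPP]
  let D : SimDrawing G :=
    { pos := pos
      pos_injective := by
        intro v w h
        have h1 : (2 * X false v + 2 : ℝ) = 2 * X false w + 2 := congrArg Prod.fst h
        apply hinj false
        have h2 : (X false v : ℝ) = X false w := by linarith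
        exact_mod_cast h2
      poly := fun i e => path X π (B i) (P i e)
      joins := by
        intro i a b hab
        obtain ⟨h1, -, -⟩ := hP i s(a, b) hab
        have hf : (path X π (B i) (P i s(a, b))).first = pos (P i s(a, b)) := hpos _ _
        have hl : (path X π (B i) (P i s(a, b))).last = pos (π (B i) (P i s(a, b))) := hpos _ _
        rw [hf, hl]
        rcases Sym2.eq_iff.1 h1 with ⟨h2, h3⟩ | ⟨h2, h3⟩
        · left; exact ⟨congrArg pos h2.symm, congrArg pos h3.symm⟩
        · right; exact ⟨congrArg pos h3.symm, congrArg pos h2.symm⟩ }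
  refine ⟨D, ⟨?_, ?_, ?_⟩, ⟨?_, ?_⟩, ?_⟩
  · intro i e he e' he' hee r hr
    exfalso
    obtain ⟨-, h2, h2'⟩ := hP i e he
    obtain ⟨-, h4, h4'⟩ := hP i e' he'
    refine disjoint_same hC (hne i e he i e' he' (Or.inr hee) rfl) ?_ ?_ hr.1 hr.2
    · intro h
      rw [h, h4] at h2'
      simp at h2'
    · intro h
      rw [h, h2] at h4'
      simp at h4'
  · intro i e he j e' he' hor s hs t ht
    by_cases hB : B i = B j
    · have hn := hne i e he j e' he' hor hB
      have hf := hfix j e' he'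
      change t ∈ (path X π (B j) (P j e')).segs at ht
      rw [← hB] at ht hf
      exact subsingleton_of_not_cross (not_cross_same hC hn (hfix i e he) hf hs ht)
    · have hB' : B j = !B i := by cases h : B i <;> cases h' : B j <;> simp_all
      have hf := hfix j e' he'
      change t ∈ (path X π (B j) (P j e')).segs at ht
      rw [hB'] at ht hf
      exact (cross_diff hC (hfix i e he) hf hs ht).2
  · intro i j hij e he e' he' s hs t ht hst
    by_cases hB : B i = B j
    · have hn := hne i e he j e' he' (Or.inl hij) hB
      have hf := hfix j e' he'
      change t ∈ (path X π (B j) (P j e')).segs at ht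
      rw [← hB] at ht hf
      exact absurd hst (not_cross_same hC hn (hfix i e he) hf hs ht)
    · have hB' : B j = !B i := by cases h : B i <;> cases h' : B j <;> simp_all
      have hf := hfix j e' he'
      change t ∈ (path X π (B j) (P j e')).segs at ht
      rw [hB'] at ht hf
      exact (cross_diff hC (hfix i e he) hf hs ht).1 hst
  · intro v
    have h1 := hcard false v
    have h2 := hcard true v
    refine ⟨2 * X false v + 2, 2 * X true v + 2, ?_, by omega, by omega, by omega, by omega⟩
    change pos v = _
    simp [pos]
  · intro i e he k
    have hco : ∀ (β : Bool) (a b : ℤ), 1 ≤ a → a ≤ 2 * (Fintype.card V : ℤ) → 1 ≤ b →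
        b ≤ 2 * (Fintype.card V : ℤ) →
        OnGridPt (2 * (Fintype.card V : ℤ)) (2 * (Fintype.card V : ℤ)) (co β a b) := by
      intro β a b h1 h2 h3 h4
      cases β
      · exact ⟨a, b, rfl, h1, h2, h3, h4⟩
      · exact ⟨b, a, rfl, h3, h4, h1, h2⟩
    set p := P i e with hp
    have a1 := hcard (B i) p
    have a2 := hcard (!B i) p
    have a3 := hcard (B i) (π (B i) p)
    have a4 := hcard (!B i) (π (B i) p)
    change OnGridPt _ _ ((path X π (B i) p).pts k)
    change Fin 3 at k
    fin_cases k
    · have := hco (B i) (2 * X (B i) p + 2) (2 * X (!B i) p + 2)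
        (by omega) (by omega) (by omega) (by omega)
      push_cast at this
      exact this
    · have := hco (B i) (2 * X (B i) p + 2) (2 * X (!B i) (π (B i) p) + 1)
        (by omega) (by omega) (by omega) (by omega)
      push_cast at this
      exact this
    · have := hco (B i) (2 * X (B i) (π (B i) p) + 2) (2 * X (!B i) (π (B i) p) + 2)
        (by omega) (by omega) (by omega) (by omega)
      push_cast at this
      exact this
  · intro i e he
    exact le_refl 2

end RacAux

/-- Four matchings on a common set of `n` vertices admit a RacSim drawing on an
integer grid of size `2n × 2n` with at most one bend per edge. -/
theorem racsim_four_matchings {V : Type} [Fintype V] (n : ℕ)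
    (hcard : Fintype.card V = n) (M₁ M₂ M₃ M₄ : SimpleGraph V)
    (h₁ : IsMatchingGraph M₁) (h₂ : IsMatchingGraph M₂)
    (h₃ : IsMatchingGraph M₃) (h₄ : IsMatchingGraph M₄) :
    ∃ D : SimDrawing ![M₁, M₂, M₃, M₄], D.IsRacSim ∧
      D.OnGrid (2 * (n : ℤ)) (2 * (n : ℤ)) ∧
      ∀ i : Fin 4, D.BendsAtMost i 1 := by
  subst hcard
  obtain ⟨π₁, c₁, hs₁⟩ := RacAux.exists_struct M₁ M₂ h₁ h₂
  obtain ⟨π₂, c₂, hs₂⟩ := RacAux.exists_struct M₃ M₄ h₃ h₄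
  refine RacAux.main ![M₁, M₂, M₃, M₄] ![false, false, true, true] ![false, true, false, true]
    (by decide) (fun b => if b then π₂ else π₁) (fun b => if b then c₂ else c₁) ?_
  intro i u v h
  fin_cases i
  · exact (hs₁ u v).1 h
  · exact (hs₁ u v).2 h
  · exact (hs₂ u v).1 h
  · exact (hs₂ u v).2 h
end
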